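/- Let K be a number field and S a finite set of places of K containing all the archimedean ones. Let Q₁, Q₂, Q₃ be three distinct points in ℙ¹(K). Given any fixed choice of nonnegative integers n_{i,𝔭} for each i ∈ {1,2,3} and each prime 𝔭 ∉ S, the set { P ∈ ℙ¹(K) : δ_𝔭(P,Q_i) = n_{i,𝔭} for each i ∈ {1,2,3} and all 𝔭 ∉ S } has cardinality at most B(|S|) = 2^{16|S|}. -/

import Mathlib

section frozen

open NumberField IsDedekindDomain MvPolynomial
open scoped Classical nonZeroDivisors

set_option synthInstance.maxHeartbeats 1000000
set_option maxHeartbeats 1000000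

noncomputable section

/-- The projective line over `K`. -/
abbrev P1 (K : Type*) [Field K] := Projectivization K (Fin 2 → K)

variable {K : Type*} [Field K] [NumberField K]

/-- The additive `v`-adic valuation (order) of `x ∈ K`, with junk value `0` at `x = 0`,
normalized so that it is surjective onto `ℤ`. -/
def ordAt (v : HeightOneSpectrum (𝓞 K)) (x : K) : ℤ :=
  if hx : x = 0 then 0
  else - Multiplicative.toAdd (WithZero.unzero ((v.valuation K).ne_zero_iff.mpr hx))

/-- `min (v(x), v(y))` for a pair of coordinates, not both zero. -/
def minOrd (v : HeightOneSpectrum (𝓞 K)) (x y : K) : ℤ :=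
  if x = 0 then ordAt v y else if y = 0 then ordAt v x else min (ordAt v x) (ordAt v y)

/-- The `v`-adic logarithmic distance between two points of `ℙ¹(K)`:
`δ_v(P,Q) = v(x₁y₂ - x₂y₁) - min(v x₁, v y₁) - min(v x₂, v y₂)`, with value `⊤` when `P = Q`
(it is independent of the choice of homogeneous coordinates, so we compute it on the chosen
representatives). -/
def logDist (v : HeightOneSpectrum (𝓞 K)) (P Q : P1 K) : WithTop ℤ :=
  if P = Q then ⊤
  else ((ordAt v (P.rep 0 * Q.rep 1 - P.rep 1 * Q.rep 0)
        - minOrd v (P.rep 0) (P.rep 1) - minOrd v (Q.rep 0) (Q.rep 1) : ℤ) : WithTop ℤ)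

/-- An endomorphism of `ℙ¹` of degree `d` defined over `K`, given by a pair of homogeneous
forms of degree `d` with no common zero over the algebraic closure, together with the induced
self-map of `ℙ¹(K)`. -/
structure P1Map (K : Type*) [Field K] (d : ℕ) where
  toFun : P1 K → P1 K
  F : MvPolynomial (Fin 2) K
  G : MvPolynomial (Fin 2) K
  homF : F.IsHomogeneous d
  homG : G.IsHomogeneous d
  coprime : ∀ x y : AlgebraicClosure K,
    aeval ![x, y] F = 0 → aeval ![x, y] G = 0 → x = 0 ∧ y = 0
  compat : ∀ (x y : K) (hxy : ![x, y] ≠ 0)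
    (h : ![eval ![x, y] F, eval ![x, y] G] ≠ 0),
    toFun (Projectivization.mk K ![x, y] hxy) =
      Projectivization.mk K ![eval ![x, y] F, eval ![x, y] G] h

variable {d : ℕ}

/-- `φ` has good reduction at the finite place `v`: some representing pair of forms has
coefficients in the valuation ring at `v`, not all in the maximal ideal, and the reductions
of the two forms modulo `v` have no common zero in `ℙ¹` of the algebraic closure of the
residue field. -/
def GoodReductionAt (φ : P1Map K d) (v : HeightOneSpectrum (𝓞 K)) : Prop :=
  ∃ c : K, c ≠ 0 ∧
    ∃ F₀ G₀ : MvPolynomial (Fin 2) (v.valuation (K := K)).valuationSubring,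
      MvPolynomial.map ((v.valuation (K := K)).valuationSubring.subtype) F₀ = C c * φ.F ∧
      MvPolynomial.map ((v.valuation (K := K)).valuationSubring.subtype) G₀ = C c * φ.G ∧
      ((∃ m, F₀.coeff m ∉ IsLocalRing.maximalIdeal (v.valuation (K := K)).valuationSubring) ∨
        (∃ m, G₀.coeff m ∉ IsLocalRing.maximalIdeal (v.valuation (K := K)).valuationSubring)) ∧
      ∀ x y : AlgebraicClosure
          (IsLocalRing.ResidueField (v.valuation (K := K)).valuationSubring),
        eval ![x, y] (MvPolynomial.map
          ((algebraMap (IsLocalRing.ResidueField (v.valuation (K := K)).valuationSubring)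
              (AlgebraicClosure _)).comp
            (IsLocalRing.residue _)) F₀) = 0 →
        eval ![x, y] (MvPolynomial.map
          ((algebraMap (IsLocalRing.ResidueField (v.valuation (K := K)).valuationSubring)
              (AlgebraicClosure _)).comp
            (IsLocalRing.residue _)) G₀) = 0 →
        x = 0 ∧ y = 0

/-- `φ` has good reduction outside `S`, where `S` consists of all archimedean places together
with the finite places in `T`. -/
def GoodReductionOutside (φ : P1Map K d) (T : Finset (HeightOneSpectrum (𝓞 K))) : Prop :=
  ∀ v ∉ T, GoodReductionAt φ v

/-- `P` is a periodic point of `φ`. -/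
def IsPeriodicPoint (φ : P1Map K d) (P : P1 K) : Prop :=
  ∃ n, 0 < n ∧ φ.toFun^[n] P = P

/-- `P` is a preperiodic point of `φ`. -/
def IsPreperiodicPoint (φ : P1Map K d) (P : P1 K) : Prop :=
  ∃ m, IsPeriodicPoint φ (φ.toFun^[m] P)

/-- `P` is a tail point of `φ`: preperiodic but not periodic. -/
def IsTailPoint (φ : P1Map K d) (P : P1 K) : Prop :=
  IsPreperiodicPoint φ P ∧ ¬ IsPeriodicPoint φ P

/-- The set `Tail(φ,K,P)` of `K`-rational tail points of `P`: non-periodic points having `P`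
in their forward orbit. -/
def TailOf (φ : P1Map K d) (P : P1 K) : Set (P1 K) :=
  {Q | ¬ IsPeriodicPoint φ Q ∧ ∃ n, φ.toFun^[n] Q = P}

/-- `P = [a:b]` is a critical point of `φ = [F:G]`: the algebraic condition
`φ([x:y]) = φ([a:b])`, i.e. the form `G(a,b)·F(X,Y) - F(a,b)·G(X,Y)`, vanishes to order
at least `2` at `[a:b]`. -/
def IsCriticalPt (φ : P1Map K d) (P : P1 K) : Prop :=
  ∃ (a b : K) (hab : ![a, b] ≠ 0), P = Projectivization.mk K ![a, b] hab ∧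
    (C b * X 0 - C a * X 1) ^ 2 ∣
      (C (eval ![a, b] φ.G) * φ.F - C (eval ![a, b] φ.F) * φ.G)

/-- `P` belongs to a critical cycle of `φ`: it lies in the orbit of a critical periodic
point. -/
def InCriticalCycle (φ : P1Map K d) (P : P1 K) : Prop :=
  ∃ Q, IsCriticalPt φ Q ∧ IsPeriodicPoint φ Q ∧ ∃ n, φ.toFun^[n] Q = P

/-- The cardinality `|S|` of the set of places `S` consisting of all archimedean places
together with the finite places in `T`. -/
def sCard (K : Type*) [Field K] [NumberField K] (T : Finset (HeightOneSpectrum (𝓞 K))) : ℕ :=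
  T.card + Fintype.card (InfinitePlace K)

/-- `B(s) = 2^{16 s}`. -/
def Bconst (s : ℕ) : ℕ := 2 ^ (16 * s)

/-- `C(n,s) = e^{(6n)^{3n} (n s + 1 - n)}`. -/
def Cconst (n s : ℕ) : ℝ := Real.exp ((6 * n : ℝ) ^ (3 * n) * (n * s + 1 - n))

/-- `CV(d,s) = (3B(s)+13)d + 27B(s) + C(5,s) + 6C(3,s) + 32`. -/
def CVconst (d s : ℕ) : ℝ :=
  (3 * (Bconst s : ℝ) + 13) * d + 27 * (Bconst s : ℝ) + Cconst 5 s + 6 * Cconst 3 s + 32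

/-- `L₁(d,s) = (d-1)(1 + d(1 + B(s)))`. -/
def L1const (d s : ℕ) : ℕ := (d - 1) * (1 + d * (1 + Bconst s))

/-- `L₂(d,s) = max{(2(C(3,s)+2)+1)d + 1, (d-1)(1 + B(s)(B(s) + C(3,s) + 3))}`. -/
def L2const (d s : ℕ) : ℝ :=
  max ((2 * (Cconst 3 s + 2) + 1) * d + 1)
    (((d : ℝ) - 1) * (1 + (Bconst s : ℝ) * ((Bconst s : ℝ) + Cconst 3 s + 3)))

/-- `L₃(d,s) = ((1 + 3B(s))B(s) + 1)(d-1)`. -/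
def L3const (d s : ℕ) : ℕ := ((1 + 3 * Bconst s) * Bconst s + 1) * (d - 1)

/-- `L₄(d,s) = (C(3,s) + 3)(d-1)`. -/
def L4const (d s : ℕ) : ℝ := (Cconst 3 s + 3) * ((d : ℝ) - 1)

end


end frozen

set_option maxHeartbeats 1000000

section

namespace TPL
open Polynomial

section pade
variable {K : Type*} [Field K]

/-- power series inverse of `(X+u)^(N+1)` -/
noncomputable def pinv (N : ℕ) (u : K) : PowerSeries K :=
  PowerSeries.mk fun k => (-1) ^ k * ((N + k).choose N : K) * (u⁻¹) ^ (N + 1 + k)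

lemma pinv_mul (N : ℕ) {u : K} (hu : u ≠ 0) :
    pinv N u * (PowerSeries.X + PowerSeries.C u) ^ (N + 1) = 1 := by
  have h1 : (PowerSeries.mk (fun n => ((N + n).choose N : K))) * (1 - PowerSeries.X) ^ (N + 1)
      = 1 := by
    have := (PowerSeries.invOneSubPow K (N + 1)).val_inv
    rwa [PowerSeries.invOneSubPow_val_succ_eq_mk_add_choose,
      PowerSeries.invOneSubPow_inv_eq_one_sub_pow] at this
  have h2 := congrArg (PowerSeries.rescale (-u⁻¹)) h1
  rw [map_mul, map_pow, map_sub, map_one, PowerSeries.rescale_X] at h2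
  have h3 : (PowerSeries.X + PowerSeries.C u : PowerSeries K) =
      PowerSeries.C u * (1 - PowerSeries.C (-u⁻¹) * PowerSeries.X) := by
    rw [mul_sub, ← mul_assoc, ← map_mul]
    have : u * -u⁻¹ = -1 := by field_simp
    rw [this]; simp; ring
  have h4 : pinv N u = PowerSeries.C (u⁻¹ ^ (N + 1)) *
      (PowerSeries.rescale (-u⁻¹)) (PowerSeries.mk (fun n => ((N + n).choose N : K))) := by
    ext k
    simp only [pinv, PowerSeries.coeff_mk, PowerSeries.coeff_C_mul, PowerSeries.coeff_rescale]
    rw [neg_pow u⁻¹ k]; ring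
  rw [h3, h4, mul_pow, ← map_pow]
  calc _ = (PowerSeries.C (u⁻¹ ^ (N + 1)) * PowerSeries.C (u ^ (N+1))) * ((PowerSeries.rescale (-u⁻¹)) (PowerSeries.mk (fun n => ((N + n).choose N : K))) * (1 - PowerSeries.C (-u⁻¹) * PowerSeries.X) ^ (N+1)) := by ring
    _ = 1 := by
      rw [h2, ← map_mul, ← mul_pow, inv_mul_cancel₀ hu]; simp

noncomputable def rho (N m : ℕ) (u v : K) : K :=
  PowerSeries.coeff m (pinv N u * pinv N v)

lemma rho_eq (N m : ℕ) (u v : K) : rho N m u v =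
    ∑ p ∈ Finset.HasAntidiagonal.antidiagonal m, (-1) ^ m * (((N + p.1).choose N * (N + p.2).choose N : ℕ) : K) *
      ((u⁻¹) ^ (N + 1 + p.1) * (v⁻¹) ^ (N + 1 + p.2)) := by
  rw [rho, PowerSeries.coeff_mul]
  refine Finset.sum_congr rfl fun p hp => ?_
  simp only [pinv, PowerSeries.coeff_mk]
  rw [← Finset.HasAntidiagonal.mem_antidiagonal.mp hp, pow_add (-1 : K)]
  push_cast; ring

/-- The power series `(α + β (X + a)) / ((X+u)(X+v))^(N+1)`. -/
noncomputable def gser (N : ℕ) (α β a u v : K) : PowerSeries K :=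
  (PowerSeries.C (α + β * a) + PowerSeries.C β * PowerSeries.X) * (pinv N u * pinv N v)

noncomputable def resid (N : ℕ) (α β a u v : K) : K :=
  (α + β * a) * rho N N u v + β * rho N (N - 1) u v

lemma coeff_gser (N : ℕ) (hN : 1 ≤ N) (α β a u v : K) :
    PowerSeries.coeff N (gser N α β a u v) = resid N α β a u v := by
  obtain ⟨n, rfl⟩ : ∃ n, N = n + 1 := ⟨N - 1, by omega⟩
  rw [gser, resid, add_mul, map_add, PowerSeries.coeff_C_mul, mul_assoc, PowerSeries.coeff_C_mul,
    PowerSeries.coeff_succ_X_mul]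
  rfl

/-- truncated expansion -/
noncomputable def qpol (N : ℕ) (α β a u v : K) : K[X] :=
  ∑ m ∈ Finset.range (N + 1), C (PowerSeries.coeff m (gser N α β a u v)) * (X - C a) ^ m

lemma qpol_dvd (N : ℕ) (α β a b c : K) (hb : a ≠ b) (hc : a ≠ c) :
    (X - C a) ^ (N + 1) ∣ qpol N α β a (a - b) (a - c) * ((X - C b) * (X - C c)) ^ (N + 1)
      - (C α + C β * X) := by
  set g := gser N α β a (a - b) (a - c) with hg
  have key : g * ((PowerSeries.X + PowerSeries.C (a - b)) * (PowerSeries.X + PowerSeries.C (a - c)))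
      ^ (N + 1) = PowerSeries.C (α + β * a) + PowerSeries.C β * PowerSeries.X := by
    have h1 := pinv_mul N (sub_ne_zero.mpr hb)
    have h2 := pinv_mul N (sub_ne_zero.mpr hc)
    rw [hg, gser, mul_pow]
    linear_combination (PowerSeries.C (α + β * a) + PowerSeries.C β * PowerSeries.X) *
      ((pinv N (a-c) * (PowerSeries.X + PowerSeries.C (a - c)) ^ (N + 1)) * h1 + h2)
  have h1 : (X : K[X]) ^ (N + 1) ∣ (PowerSeries.trunc (N+1) g) *
      ((X + C (a - b)) * (X + C (a - c))) ^ (N + 1) - (C (α + β * a) + C β * X) := by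
    rw [Polynomial.X_pow_dvd_iff]
    intro d hd
    have h2 : PowerSeries.coeff d (g * ((PowerSeries.X + PowerSeries.C (a - b)) * (PowerSeries.X + PowerSeries.C (a - c)))
      ^ (N + 1)) = ((PowerSeries.trunc (N+1) g) *
      ((X + C (a - b)) * (X + C (a - c))) ^ (N + 1)).coeff d := by
      rw [← Polynomial.coeff_coe, Polynomial.coe_mul, PowerSeries.coeff_mul, PowerSeries.coeff_mul]
      refine Finset.sum_congr rfl fun p hp => ?_
      have := Finset.HasAntidiagonal.mem_antidiagonal.mp hp
      rw [Polynomial.coeff_coe, PowerSeries.coeff_trunc, if_pos (by omega)]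
      congr 2
      simp
    rw [coeff_sub, ← h2, key, ← Polynomial.coeff_coe]
    simp
  have h3 := map_dvd (Polynomial.compRingHom (X - C a)) h1
  have e1 : qpol N α β a (a - b) (a - c) = (PowerSeries.trunc (N+1) g).comp (X - C a) := by
    have : PowerSeries.trunc (N+1) g =
        ∑ m ∈ Finset.range (N + 1), C (PowerSeries.coeff m g) * X ^ m := by
      ext k
      simp [PowerSeries.coeff_trunc, finsetSum_coeff, coeff_X_pow]
    rw [qpol, this, Polynomial.sum_comp]
    refine Finset.sum_congr rfl fun m _ => ?_
    rw [mul_comp, pow_comp, X_comp, C_comp]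
  have e2 : ((X : K[X]) + C (a - b)).comp (X - C a) = X - C b := by
    rw [add_comp, X_comp, C_comp, C_sub]; ring
  have e3 : ((X : K[X]) + C (a - c)).comp (X - C a) = X - C c := by
    rw [add_comp, X_comp, C_comp, C_sub]; ring
  have e4 : (C (α + β * a) + C β * X).comp (X - C a) = C α + C β * X := by
    rw [add_comp, mul_comp, X_comp, C_comp, C_comp, C_add, C_mul]; ring
  rw [coe_compRingHom_apply, coe_compRingHom_apply, sub_comp, mul_comp, pow_comp, pow_comp,
    mul_comp, X_comp, e2, e3, e4, ← e1] at h3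
  exact h3

lemma qpol_natDegree (N : ℕ) (α β a u v : K) : (qpol N α β a u v).natDegree ≤ N := by
  refine Polynomial.natDegree_sum_le_of_forall_le _ _ fun m hm => ?_
  refine (natDegree_C_mul_le _ _).trans ?_
  have := Finset.mem_range.mp hm
  simp; omega

lemma qpol_coeff (N : ℕ) (α β a u v : K) :
    (qpol N α β a u v).coeff N = PowerSeries.coeff N (gser N α β a u v) := by
  rw [qpol, Finset.sum_range_succ, coeff_add, finsetSum_coeff, Finset.sum_eq_zero, zero_add,
    coeff_C_mul]
  · have : ((X - C a) ^ N).coeff N = 1 := by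
      have h := (monic_X_sub_C a).pow N
      have h2 : ((X - C a) ^ N).natDegree = N := by simp
      have h3 := h.coeff_natDegree
      rwa [h2] at h3
    rw [this, mul_one]
  · intro m hm
    have := Finset.mem_range.mp hm
    rw [coeff_C_mul, coeff_eq_zero_of_natDegree_lt (by simpa using this), mul_zero]

variable (a : Fin 3 → K)

noncomputable def res (N : ℕ) (α β : K) (i : Fin 3) : K :=
  resid N α β (a i) (a i - a (i+1)) (a i - a (i+2))

noncomputable def epol (i : Fin 3) : K[X] := (X - C (a (i+1))) * (X - C (a (i+2)))

noncomputable def qp (N : ℕ) (α β : K) (i : Fin 3) : K[X] :=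
  qpol N α β (a i) (a i - a (i+1)) (a i - a (i+2))

lemma epol_monic (i : Fin 3) : (epol a i).Monic := (monic_X_sub_C _).mul (monic_X_sub_C _)

lemma epol_natDegree (i : Fin 3) : (epol a i).natDegree = 2 := by
  rw [epol, (monic_X_sub_C _).natDegree_mul (monic_X_sub_C _)]; simp

lemma partial_fractions (ha : Function.Injective a) (N : ℕ) (α β : K) :
    ∑ i, qp a N α β i * epol a i ^ (N + 1) = C α + C β * X := by
  rw [← sub_eq_zero]
  have hne : ∀ i : Fin 3, a i ≠ a (i+1) ∧ a i ≠ a (i+2) := by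
    intro i
    constructor <;> intro h <;> have := ha h <;> revert this <;> fin_cases i <;> decide
  have hself : ∀ i, (X - C (a i)) ^ (N + 1) ∣
      qp a N α β i * epol a i ^ (N + 1) - (C α + C β * X) := fun i =>
    qpol_dvd N α β _ _ _ (hne i).1 (hne i).2
  have e1 : ∀ i, (X - C (a (i+1))) ^ (N + 1) ∣ qp a N α β i * epol a i ^ (N + 1) := fun i =>
    Dvd.dvd.mul_left (pow_dvd_pow_of_dvd (Dvd.intro _ rfl) _) _
  have e2 : ∀ i, (X - C (a (i+2))) ^ (N + 1) ∣ qp a N α β i * epol a i ^ (N + 1) := fun i =>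
    Dvd.dvd.mul_left (pow_dvd_pow_of_dvd (Dvd.intro_left _ rfl) _) _
  have hd : (∏ i, (X - C (a i)) ^ (N + 1)) ∣
      (∑ i, qp a N α β i * epol a i ^ (N + 1)) - (C α + C β * X) := by
    refine Finset.prod_dvd_of_coprime ?_ ?_
    · intro i _ j _ hij
      exact (IsCoprime.pow (isCoprime_X_sub_C_of_isUnit_sub
        (sub_ne_zero.mpr (fun h => hij (ha h))).isUnit))
    · intro i _
      have : (∑ j, qp a N α β j * epol a j ^ (N + 1)) - (C α + C β * X) =
          (qp a N α β i * epol a i ^ (N + 1) - (C α + C β * X)) +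
          (qp a N α β (i+2) * epol a (i+2) ^ (N + 1) + qp a N α β (i+1) * epol a (i+1) ^ (N + 1)) := by
        rw [Fin.sum_univ_three]
        fin_cases i <;> simp <;> ring
      rw [this]
      refine dvd_add (hself i) (dvd_add ?_ ?_)
      · have := e1 (i+2)
        rwa [show i + 2 + 1 = i by clear * -; revert i; decide] at this
      · have := e2 (i+1)
        rwa [show i + 1 + 2 = i by clear * -; revert i; decide] at this
  refine Polynomial.eq_zero_of_dvd_of_natDegree_lt hd ?_
  have : (∏ i, (X - C (a i)) ^ (N + 1)).natDegree = 3 * N + 3 := by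
    rw [natDegree_prod_of_monic _ _ (fun i _ => (monic_X_sub_C _).pow _)]
    simp; ring
  rw [this]
  refine lt_of_le_of_lt (natDegree_sub_le_of_le (m := 3 * N + 2) (n := 3 * N + 2) ?_ ?_) (by simp)
  · refine natDegree_sum_le_of_forall_le _ _ fun i _ => ?_
    refine natDegree_mul_le.trans ?_
    rw [(epol_monic a i).natDegree_pow, epol_natDegree]
    have := qpol_natDegree N α β (a i) (a i - a (i+1)) (a i - a (i+2))
    change (qpol _ _ _ _ _ _).natDegree + _ ≤ _
    omega
  · refine (natDegree_add_le_of_degree_le (n := 1) (by simp) ?_).trans (by omega)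
    refine (natDegree_C_mul_le _ _).trans (by simp)

lemma coeff_linear (α β : K) (k : ℕ) (hk : 2 ≤ k) : (C α + C β * X : K[X]).coeff k = 0 := by
  rw [coeff_add, coeff_C, coeff_C_mul, coeff_X, if_neg (by omega), if_neg (by omega)]; simp

lemma sum_res (ha : Function.Injective a) (N : ℕ) (hN : 1 ≤ N) (α β : K) :
    ∑ i, res a N α β i = 0 := by
  have h := congrArg (fun p => p.coeff (N + (2 * N + 2))) (partial_fractions a ha N α β)
  simp only [finsetSum_coeff] at h
  rw [coeff_linear _ _ _ (by omega)] at h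
  rw [← h]
  refine Finset.sum_congr rfl fun i _ => ?_
  have h2 : (epol a i ^ (N+1)).natDegree = 2 * N + 2 := by
    rw [(epol_monic a i).natDegree_pow, epol_natDegree]; ring
  rw [qp, coeff_mul_add_eq_of_natDegree_le (qpol_natDegree N α β _ _ _) h2.le,
    show (epol a i ^ (N+1)).coeff (2 * N + 2) = 1 by
      rw [← h2]; exact ((epol_monic a i).pow _).coeff_natDegree, mul_one, qpol_coeff, coeff_gser N hN]
  rfl

lemma res_ne_zero [CharZero K] (ha : Function.Injective a) (N : ℕ) (hN : 1 ≤ N) (α β : K)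
    (h0 : ∀ i, res a N α β i = 0) : α = 0 ∧ β = 0 := by
  set r : Fin 3 → ℕ → K := fun i m =>
    PowerSeries.coeff m (gser N α β (a i) (a i - a (i+1)) (a i - a (i+2))) with hr
  set Q : Fin 3 → K[X] := fun i =>
    ∑ m ∈ Finset.range N, C (r i m / ((m : K) - N)) * (X - C (a i)) ^ m with hQ
  set G : K[X] := ∑ i, Q i * epol a i ^ N with hG
  set p : K[X] := ∏ i, (X - C (a i)) with hp
  have hpi : ∀ i, p = (X - C (a i)) * epol a i := by
    intro i; rw [hp, Fin.prod_univ_three]; fin_cases i <;> simp [epol] <;> ring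
  have hq : ∀ i, (X - C (a i)) * derivative (Q i) - (N : K[X]) * Q i = qp a N α β i := by
    intro i
    have hN0 : r i N = 0 := by
      rw [hr]; simp only; rw [coeff_gser N hN]; exact h0 i
    have : qp a N α β i = ∑ m ∈ Finset.range N, C (r i m) * (X - C (a i)) ^ m := by
      rw [qp, qpol, Finset.sum_range_succ]
      change _ + C (r i N) * _ = _
      rw [hN0]; simp [hr]
    rw [this, hQ]
    simp only [derivative_sum, Finset.mul_sum]
    rw [← Finset.sum_sub_distrib]
    refine Finset.sum_congr rfl fun m hm => ?_
    have hm := Finset.mem_range.mp hm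
    have hne : (m : K) - N ≠ 0 := by
      rw [sub_ne_zero]; exact_mod_cast hm.ne
    have e : C (r i m) = C (r i m / ((m : K) - N)) * ((m : K[X]) - (N : K[X])) := by
      rw [← C_eq_natCast, ← C_eq_natCast, ← C_sub, ← C_mul]; congr 1; field_simp
    rw [e, derivative_C_mul, derivative_X_sub_C_pow]
    rcases m with _ | m
    · simp; ring
    · simp; ring
  have hid : derivative G * p - (N : K[X]) * G * derivative p = C α + C β * X := by
    rw [← partial_fractions a ha N α β, hG, derivative_sum, Finset.sum_mul, Finset.mul_sum,
      Finset.sum_mul, ← Finset.sum_sub_distrib]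
    refine Finset.sum_congr rfl fun i _ => ?_
    obtain ⟨n, rfl⟩ : ∃ n, N = n + 1 := ⟨N - 1, by omega⟩
    rw [← hq i, hpi i, derivative_mul, derivative_mul, derivative_X_sub_C, derivative_pow]
    simp only [add_tsub_cancel_right, C_eq_natCast]
    ring
  have hGdeg : G.natDegree ≤ 3 * N - 1 := by
    refine natDegree_sum_le_of_forall_le _ _ fun i _ => ?_
    refine natDegree_mul_le.trans ?_
    rw [(epol_monic a i).natDegree_pow, epol_natDegree]
    have : (Q i).natDegree ≤ N - 1 := by
      refine natDegree_sum_le_of_forall_le _ _ fun m hm => ?_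
      refine (natDegree_C_mul_le _ _).trans ?_
      have := Finset.mem_range.mp hm
      simp; omega
    omega
  have hpm : p.Monic := monic_prod_of_monic _ _ fun i _ => monic_X_sub_C _
  have hpd : p.natDegree = 3 := by
    rw [hp, natDegree_prod_of_monic _ _ (fun i _ => monic_X_sub_C _)]; simp
  have hG0 : G = 0 := by
    by_contra hne
    have hc := congrArg (fun f => f.coeff (G.natDegree + 2)) hid
    beta_reduce at hc
    rw [coeff_linear _ _ _ (by omega), coeff_sub, mul_assoc, ← C_eq_natCast, coeff_C_mul,
      coeff_mul_add_eq_of_natDegree_le le_rfl (show (derivative p).natDegree ≤ 2 by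
        refine (natDegree_derivative_le p).trans (by omega))] at hc
    have h3 : (derivative p).coeff 2 = 3 := by
      rw [coeff_derivative]
      have := hpm.coeff_natDegree
      rw [hpd] at this
      rw [this]; norm_num
    have h1 : (derivative G * p).coeff (G.natDegree + 2) = G.leadingCoeff * G.natDegree := by
      rcases hd : G.natDegree with _ | D
      · rw [derivative_of_natDegree_zero hd]; simp
      · rw [show D + 1 + 2 = D + 3 by ring, coeff_mul_add_eq_of_natDegree_le
          ((natDegree_derivative_le G).trans (by omega)) hpd.le, coeff_derivative]
        have := hpm.coeff_natDegree
        rw [hpd] at this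
        rw [this, leadingCoeff, hd]; push_cast; ring
    rw [h1, h3] at hc
    have : G.leadingCoeff * ((G.natDegree : K) - (3 * N : ℕ)) = 0 := by
      rw [leadingCoeff] at *; push_cast; linear_combination hc
    rcases mul_eq_zero.mp this with h | h
    · exact hne (leadingCoeff_eq_zero.mp h)
    · rw [sub_eq_zero] at h
      have := Nat.cast_injective h
      omega
  rw [hG0] at hid
  simp only [derivative_zero, zero_mul, mul_zero, sub_zero] at hid
  constructor
  · have := congrArg (fun f => f.coeff 0) hid; simpa using this.symm
  · have := congrArg (fun f => f.coeff 1) hid; simpa [coeff_C] using this.symm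

end pade
end TPL

end

section

namespace TPL

section locals
variable {K : Type*} [Field K]

/-- An absolute value with triangle constant `A`. -/
def AV (f : AbsoluteValue K ℝ) (A : ℝ) : Prop := (A = 1 ∧ IsNonarchimedean f) ∨ A = 2

lemma AV.one_le {f : AbsoluteValue K ℝ} {A : ℝ} (h : AV f A) : 1 ≤ A := by
  rcases h with ⟨h, _⟩ | h <;> rw [h] <;> norm_num

lemma AV.add_le {f : AbsoluteValue K ℝ} {A : ℝ} (h : AV f A) (x y : K) {B : ℝ}
    (hx : f x ≤ B) (hy : f y ≤ B) : f (x + y) ≤ A * B := by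
  rcases h with ⟨h, hn⟩ | h
  · rw [h, one_mul]; exact (hn x y).trans (max_le hx hy)
  · rw [h]; have := f.add_le x y; linarith

lemma AV.sub_le {f : AbsoluteValue K ℝ} {A : ℝ} (h : AV f A) (x y : K) {B : ℝ}
    (hx : f x ≤ B) (hy : f y ≤ B) : f (x - y) ≤ A * B := by
  rw [sub_eq_add_neg]; exact h.add_le _ _ hx (by rwa [f.map_neg])

lemma natCast_le (f : AbsoluteValue K ℝ) (n : ℕ) : f (n : K) ≤ n := by
  induction n with
  | zero => simp
  | succ n ih => push_cast; have := f.add_le (n : K) 1; rw [f.map_one] at this; linarith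

lemma na_sum_le {ι : Type*} {f : AbsoluteValue K ℝ} (hn : IsNonarchimedean f) {B : ℝ} (hB : 0 ≤ B)
    (s : Finset ι) (g : ι → K) (h : ∀ i ∈ s, f (g i) ≤ B) : f (∑ i ∈ s, g i) ≤ B := by
  classical
  induction s using Finset.induction_on with
  | empty => simpa using hB
  | insert a s ha ih =>
    rw [Finset.sum_insert ha]
    exact (hn _ _).trans (max_le (h _ (by simp)) (ih fun i hi => h i (by simp [hi])))

lemma sum_bound {f : AbsoluteValue K ℝ} {A : ℝ} (h : AV f A) (N m : ℕ) (hm : m ≤ N)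
    (T : ℕ × ℕ → K) (B : ℝ) (hB : 0 ≤ B)
    (hT : ∀ p ∈ Finset.HasAntidiagonal.antidiagonal m, f (T p) ≤ B) :
    f (∑ p ∈ Finset.HasAntidiagonal.antidiagonal m,
      (((N + p.1).choose N * (N + p.2).choose N : ℕ) : K) * T p) ≤ A ^ (5 * N) * B := by
  rcases h with ⟨h, hn⟩ | h
  · rw [h, one_pow, one_mul]
    refine na_sum_le hn hB _ _ fun p hp => ?_
    rw [map_mul]
    calc _ ≤ 1 * B := by
          apply mul_le_mul _ (hT p hp) (f.nonneg _) zero_le_one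
          exact hn.apply_natCast_le_one
      _ = B := one_mul B
  · rw [h]
    calc _ ≤ ∑ p ∈ Finset.HasAntidiagonal.antidiagonal m, f ((((N + p.1).choose N * (N + p.2).choose N : ℕ) : K) * T p) := f.sum_le _ _
      _ ≤ ∑ p ∈ Finset.HasAntidiagonal.antidiagonal m, (16 : ℝ) ^ N * B := by
        refine Finset.sum_le_sum fun p hp => ?_
        rw [map_mul]
        have hp' := Finset.HasAntidiagonal.mem_antidiagonal.mp hp
        refine mul_le_mul ((natCast_le f _).trans ?_) (hT p hp) (f.nonneg _) (by positivity)
        have h1 : (N + p.1).choose N ≤ 2 ^ (2 * N) := (Nat.choose_le_two_pow _ _).trans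
          (Nat.pow_le_pow_right (by norm_num) (by omega))
        have h2 : (N + p.2).choose N ≤ 2 ^ (2 * N) := (Nat.choose_le_two_pow _ _).trans
          (Nat.pow_le_pow_right (by norm_num) (by omega))
        have h3 := Nat.mul_le_mul h1 h2
        have h4 : 2 ^ (2 * N) * 2 ^ (2 * N) = 16 ^ N := by
          rw [← pow_add, show 2 * N + 2 * N = 4 * N by ring, pow_mul]; norm_num
        rw [h4] at h3
        exact_mod_cast h3
      _ = ((m + 1 : ℕ) : ℝ) * (16 ^ N * B) := by
        rw [Finset.sum_const, Finset.Nat.card_antidiagonal, nsmul_eq_mul]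
      _ ≤ 2 ^ N * (16 ^ N * B) := by
        apply mul_le_mul_of_nonneg_right _ (by positivity)
        have : m + 1 ≤ 2 ^ N := (Nat.succ_le_succ hm).trans Nat.lt_two_pow_self
        exact_mod_cast this
      _ = 2 ^ (5 * N) * B := by
        rw [pow_mul, ← mul_assoc, ← mul_pow]; norm_num

lemma rho_bound {f : AbsoluteValue K ℝ} {A : ℝ} (h : AV f A) (N m : ℕ) (hm : m ≤ N)
    {u v : K} (hu : u ≠ 0) (hv : v ≠ 0) {M : ℝ} (hM : 1 ≤ M) (huM : f u ≤ M) (hvM : f v ≤ M) :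
    f ((u * v) ^ (2 * N + 1) * rho N m u v) ≤ A ^ (5 * N) * M ^ (2 * N - m) := by
  have : (u * v) ^ (2 * N + 1) * rho N m u v =
      ∑ p ∈ Finset.HasAntidiagonal.antidiagonal m,
      (((N + p.1).choose N * (N + p.2).choose N : ℕ) : K) *
        ((-1) ^ m * (u ^ (N - p.1) * v ^ (N - p.2))) := by
    rw [rho_eq, Finset.mul_sum]
    refine Finset.sum_congr rfl fun p hp => ?_
    have hp' := Finset.HasAntidiagonal.mem_antidiagonal.mp hp
    have h1 : u ^ (2 * N + 1) * u⁻¹ ^ (N + 1 + p.1) = u ^ (N - p.1) := by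
      rw [show 2 * N + 1 = (N - p.1) + (N + 1 + p.1) by omega, pow_add, mul_assoc, ← mul_pow,
        mul_inv_cancel₀ hu, one_pow, mul_one]
    have h2 : v ^ (2 * N + 1) * v⁻¹ ^ (N + 1 + p.2) = v ^ (N - p.2) := by
      rw [show 2 * N + 1 = (N - p.2) + (N + 1 + p.2) by omega, pow_add, mul_assoc, ← mul_pow,
        mul_inv_cancel₀ hv, one_pow, mul_one]
    rw [← h1, ← h2]; ring
  rw [this]
  refine sum_bound h N m hm _ _ (by positivity) fun p hp => ?_
  have hp' := Finset.HasAntidiagonal.mem_antidiagonal.mp hp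
  rw [map_mul, map_mul, map_pow, map_pow, map_pow, f.map_neg, f.map_one, one_pow, one_mul,
    show 2 * N - m = (N - p.1) + (N - p.2) by omega, pow_add]
  exact mul_le_mul (pow_le_pow_left₀ (f.nonneg _) huM _) (pow_le_pow_left₀ (f.nonneg _) hvM _)
    (pow_nonneg (f.nonneg _) _) (by positivity)

def XX (z : K) : Fin 3 → K := ![z, 1 - z, -1]
def aa (z : K) : Fin 3 → K := ![z - 1, z, 0]

lemma XX_sum (z : K) : XX z 0 + XX z 1 + XX z 2 = 0 := by simp [XX]

lemma XX_ne {z : K} (h0 : z ≠ 0) (h1 : z ≠ 1) (i : Fin 3) : XX z i ≠ 0 := by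
  fin_cases i
  · simpa [XX] using h0
  · simpa [XX, sub_eq_zero] using h1.symm
  · simp [XX]

lemma aa_inj {z : K} (h0 : z ≠ 0) (h1 : z ≠ 1) : Function.Injective (aa z) := by
  have h1' : z - 1 ≠ 0 := sub_ne_zero.mpr h1
  have h2 : ¬ z = z - 1 := fun h => one_ne_zero (by linear_combination h : (1 : K) = 0)
  intro i j
  fin_cases i <;> fin_cases j <;> simp [aa, h0, h1', h0.symm, h1'.symm, h2]

lemma aa_sub1 (z : K) (i : Fin 3) : aa z i - aa z (i+1) = XX z (i+2) := by
  fin_cases i <;> simp [aa, XX]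

lemma aa_sub2 (z : K) (i : Fin 3) : aa z i - aa z (i+2) = - XX z (i+1) := by
  fin_cases i <;> simp [aa, XX]

/-- local size -/
noncomputable def MM (f : AbsoluteValue K ℝ) (z : K) : ℝ := max (max (f z) (f (1 - z))) 1

lemma one_le_MM (f : AbsoluteValue K ℝ) (z : K) : 1 ≤ MM f z := le_max_right _ _

lemma XX_le (f : AbsoluteValue K ℝ) (z : K) (i : Fin 3) : f (XX z i) ≤ MM f z := by
  fin_cases i <;> simp [XX, MM]

lemma aa_le (f : AbsoluteValue K ℝ) (z : K) (i : Fin 3) : f (aa z i) ≤ MM f z := by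
  fin_cases i
  · simp [aa, MM, f.map_sub z 1]
  · simp [aa, MM]
  · simp [aa, MM]

noncomputable def VV (N : ℕ) (α β z : K) (i : Fin 3) : K :=
  (XX z 0 * XX z 1 * XX z 2) ^ (2 * N + 1) * res (aa z) N α β i

lemma VV_sum {z : K} (h0 : z ≠ 0) (h1 : z ≠ 1) (N : ℕ) (hN : 1 ≤ N) (α β : K) :
    VV N α β z 0 + VV N α β z 1 + VV N α β z 2 = 0 := by
  have := sum_res (aa z) (aa_inj h0 h1) N hN α β
  rw [Fin.sum_univ_three] at this
  simp only [VV]; rw [← mul_add, ← mul_add, this, mul_zero]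

lemma VV_bound {f : AbsoluteValue K ℝ} {A : ℝ} (h : AV f A) {z : K} (h0 : z ≠ 0) (h1 : z ≠ 1)
    (N : ℕ) (hN : 1 ≤ N) (α β : K) (hαβ : (α = 1 ∧ β = 0) ∨ (α = 0 ∧ β = 1)) (i : Fin 3) :
    f (VV N α β z i) ≤ f (XX z i) ^ (2 * N + 1) * (A ^ (5 * N + 1) * MM f z ^ (N + 1)) := by
  have e : VV N α β z i = XX z i ^ (2 * N + 1) *
      ((XX z (i+2) * - XX z (i+1)) ^ (2 * N + 1) * (- res (aa z) N α β i)) := by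
    have : XX z 0 * XX z 1 * XX z 2 = - (XX z i * (XX z (i+2) * - XX z (i+1))) := by
      fin_cases i <;> simp <;> ring
    rw [VV, this, Odd.neg_pow ⟨N, rfl⟩, mul_pow]; ring
  have hM := one_le_MM f z
  have hMp : (0 : ℝ) ≤ MM f z := by linarith
  have hA := h.one_le
  have hA0 : (0 : ℝ) ≤ A := by linarith
  rw [e, map_mul, map_pow]
  refine mul_le_mul_of_nonneg_left ?_ (pow_nonneg (f.nonneg _) _)
  rw [mul_neg, f.map_neg, res, resid, aa_sub1, aa_sub2]
  set u := XX z (i+2)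
  set v := - XX z (i+1)
  have hu : u ≠ 0 := XX_ne h0 h1 _
  have hv : v ≠ 0 := neg_ne_zero.mpr (XX_ne h0 h1 _)
  have hfu : f u ≤ MM f z := XX_le f z _
  have hfv : f v ≤ MM f z := by rw [f.map_neg]; exact XX_le f z _
  have b1 := rho_bound h N N le_rfl hu hv hM hfu hfv
  have b2 := rho_bound h N (N-1) (by omega) hu hv hM hfu hfv
  rw [show 2 * N - N = N by omega] at b1
  rw [show 2 * N - (N - 1) = N + 1 by omega] at b2
  rw [show A ^ (5 * N + 1) * MM f z ^ (N + 1) = A * (A ^ (5 * N) * MM f z ^ (N + 1)) by ring]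
  have hpos : 0 ≤ A ^ (5 * N) * MM f z ^ (N + 1) := by positivity
  rcases hαβ with ⟨rfl, rfl⟩ | ⟨rfl, rfl⟩
  · simp only [zero_mul, add_zero, one_mul]
    refine b1.trans ?_
    have : A ^ (5 * N) * MM f z ^ N ≤ A ^ (5 * N) * MM f z ^ (N + 1) := by
      exact mul_le_mul_of_nonneg_left (pow_le_pow_right₀ hM (Nat.le_succ N)) (by positivity)
    nlinarith
  · simp only [zero_add, one_mul]
    rw [mul_add]
    refine h.add_le _ _ ?_ b2
    rw [mul_left_comm, map_mul]
    calc _ ≤ MM f z * (A ^ (5 * N) * MM f z ^ N) :=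
          mul_le_mul (aa_le f z i) b1 (f.nonneg _) hMp
      _ = _ := by ring

/-- The determinant. -/
noncomputable def DD (N : ℕ) (α β z z' : K) : K :=
  VV N α β z 0 * XX z' 1 - VV N α β z 1 * XX z' 0

lemma DD_eq {z : K} (h0 : z ≠ 0) (h1 : z ≠ 1) (N : ℕ) (hN : 1 ≤ N) (α β z' : K) (i : Fin 3) :
    DD N α β z z' = VV N α β z i * XX z' (i+1) - VV N α β z (i+1) * XX z' i := by
  have a := VV_sum h0 h1 N hN α β
  have b := XX_sum z'
  fin_cases i
  · simp [DD]
  · simp only [DD]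
    change _ = VV N α β z 1 * XX z' 2 - VV N α β z 2 * XX z' 1
    linear_combination XX z' 1 * a - VV N α β z 1 * b
  · simp only [DD]
    change _ = VV N α β z 2 * XX z' 0 - VV N α β z 0 * XX z' 2
    linear_combination -XX z' 0 * a + VV N α β z 0 * b

lemma DD_bound {f : AbsoluteValue K ℝ} {A : ℝ} (h : AV f A) {z z' : K} (h0 : z ≠ 0) (h1 : z ≠ 1)
    (N : ℕ) (hN : 1 ≤ N) (α β : K) (hαβ : (α = 1 ∧ β = 0) ∨ (α = 0 ∧ β = 1)) (i : Fin 3) :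
    f (DD N α β z z') ≤ A ^ (5 * N + 2) * MM f z ^ (N + 1) *
      max (f (XX z i) ^ (2 * N + 1) * MM f z') (MM f z ^ (2 * N + 1) * f (XX z' i)) := by
  have hM := one_le_MM f z
  have hMp : (0 : ℝ) ≤ MM f z := by linarith
  have hM' := one_le_MM f z'
  have hA := h.one_le
  have hA0 : (0 : ℝ) ≤ A := by linarith
  rw [DD_eq h0 h1 N hN α β z' i]
  rw [show A ^ (5 * N + 2) = A * A ^ (5 * N + 1) by ring, mul_assoc, mul_assoc]
  have hc : 0 ≤ A ^ (5 * N + 1) * MM f z ^ (N + 1) := by positivity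
  apply h.sub_le
  · rw [map_mul]
    calc _ ≤ (f (XX z i) ^ (2 * N + 1) * (A ^ (5 * N + 1) * MM f z ^ (N + 1))) * MM f z' :=
          mul_le_mul (VV_bound h h0 h1 N hN α β hαβ i) (XX_le f z' _) (f.nonneg _)
            (mul_nonneg (pow_nonneg (f.nonneg _) _) hc)
      _ = (A ^ (5 * N + 1) * MM f z ^ (N + 1)) * (f (XX z i) ^ (2 * N + 1) * MM f z') := by ring
      _ ≤ _ := by
          refine le_trans ?_ (mul_assoc _ _ _).le
          exact mul_le_mul_of_nonneg_left (le_max_left _ _) hc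
  · rw [map_mul]
    calc _ ≤ (f (XX z (i+1)) ^ (2 * N + 1) * (A ^ (5 * N + 1) * MM f z ^ (N + 1))) * f (XX z' i) :=
          mul_le_mul_of_nonneg_right (VV_bound h h0 h1 N hN α β hαβ _) (f.nonneg _)
      _ ≤ (MM f z ^ (2 * N + 1) * (A ^ (5 * N + 1) * MM f z ^ (N + 1))) * f (XX z' i) := by
          refine mul_le_mul_of_nonneg_right (mul_le_mul_of_nonneg_right ?_ hc) (f.nonneg _)
          exact pow_le_pow_left₀ (f.nonneg _) (XX_le f z _) _
      _ = (A ^ (5 * N + 1) * MM f z ^ (N + 1)) * (MM f z ^ (2 * N + 1) * f (XX z' i)) := by ring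
      _ ≤ _ := by
          refine le_trans ?_ (mul_assoc _ _ _).le
          exact mul_le_mul_of_nonneg_left (le_max_right _ _) hc

lemma DD_ne [CharZero K] {z z' : K} (h0 : z ≠ 0) (h1 : z ≠ 1) (N : ℕ) (hN : 1 ≤ N) :
    DD N 1 0 z z' ≠ 0 ∨ DD N 0 1 z z' ≠ 0 := by
  by_contra hcon
  push Not at hcon
  obtain ⟨d1, d2⟩ := hcon
  have hP : (XX z 0 * XX z 1 * XX z 2) ^ (2 * N + 1) ≠ 0 :=
    pow_ne_zero _ (mul_ne_zero (mul_ne_zero (XX_ne h0 h1 _) (XX_ne h0 h1 _)) (XX_ne h0 h1 _))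
  -- the vectors are proportional to `XX z'`, whose last coordinate is `-1`
  have hprop : ∀ α β : K, DD N α β z z' = 0 → ∀ i, res (aa z) N α β i =
      - res (aa z) N α β 2 * XX z' i := by
    intro α β hd
    have s := sum_res (aa z) (aa_inj h0 h1) N hN α β
    rw [Fin.sum_univ_three] at s
    have k : res (aa z) N α β 0 * XX z' 1 - res (aa z) N α β 1 * XX z' 0 = 0 := by
      have : (XX z 0 * XX z 1 * XX z 2) ^ (2 * N + 1) *
        (res (aa z) N α β 0 * XX z' 1 - res (aa z) N α β 1 * XX z' 0) = 0 := by
        rw [← hd, DD, VV, VV]; ring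
      exact (mul_eq_zero.mp this).resolve_left hP
    have x := XX_sum z'
    have x2 : XX z' 2 = -1 := by simp [XX]
    rw [x2] at x
    intro i
    fin_cases i
    · change res (aa z) N α β 0 = - res (aa z) N α β 2 * XX z' 0
      linear_combination k + XX z' 0 * s - res (aa z) N α β 0 * x
    · change res (aa z) N α β 1 = - res (aa z) N α β 2 * XX z' 1
      linear_combination -k + XX z' 1 * s - res (aa z) N α β 1 * x
    · change res (aa z) N α β 2 = - res (aa z) N α β 2 * XX z' 2
      rw [x2]; ring
  have p1 := hprop _ _ d1
  have p2 := hprop _ _ d2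
  have hlin : ∀ α β : K, ∀ i, res (aa z) N α β i =
      α * res (aa z) N 1 0 i + β * res (aa z) N 0 1 i := by
    intro α β i; simp only [res, resid]; ring
  set c1 := res (aa z) N 1 0 2
  set c2 := res (aa z) N 0 1 2
  have := res_ne_zero (aa z) (aa_inj h0 h1) N hN c2 (-c1) (by
    intro i
    rw [hlin, p1 i, p2 i]; ring)
  have hc1 : c1 = 0 := by simpa using this.2
  have := res_ne_zero (aa z) (aa_inj h0 h1) N hN 1 0 (by
    intro i; rw [p1 i, hc1]; ring)
  exact one_ne_zero this.1

/-- `N = 0` version -/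
lemma D0_bound {f : AbsoluteValue K ℝ} {A : ℝ} (h : AV f A) (z z' : K) (i : Fin 3) :
    f (z - z') ≤ A * max (f (XX z i) * MM f z') (MM f z * f (XX z' i)) := by
  have : z - z' = XX z i * XX z' (i+1) - XX z (i+1) * XX z' i := by
    fin_cases i <;> simp [XX] <;> ring
  rw [this]
  apply h.sub_le
  · rw [map_mul]
    exact (mul_le_mul_of_nonneg_left (XX_le f z' _) (f.nonneg _)).trans (le_max_left _ _)
  · rw [map_mul]
    exact (mul_le_mul_of_nonneg_right (XX_le f z _) (f.nonneg _)).trans (le_max_right _ _)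

end locals
end TPL

end

section

namespace TPL

section global

/-- smallest of the three coordinates -/
noncomputable def mn {K : Type*} [Field K] (f : AbsoluteValue K ℝ) (z : K) : ℝ :=
  min (min (f z) (f (1 - z))) 1

noncomputable def idxr (x y : ℝ) : Fin 3 :=
  open Classical in if x ≤ y ∧ x ≤ 1 then 0 else if y ≤ x ∧ y ≤ 1 then 1 else 2

lemma mn_eq {K : Type*} [Field K] (f : AbsoluteValue K ℝ) (z : K) :
    f (XX z (idxr (f z) (f (1 - z)))) = mn f z := by
  unfold idxr mn
  split_ifs with h1 h2
  · simp [XX, h1.1, h1.2]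
  · simp [XX, h2.1, h2.2]
  · simp only [XX, Matrix.cons_val, f.map_neg, f.map_one]
    symm; apply min_eq_right
    rcases le_total (f z) (f (1-z)) with h | h
    · rw [min_eq_left h]; by_contra hc; exact h1 ⟨h, by linarith⟩
    · rw [min_eq_right h]; by_contra hc; exact h2 ⟨h, by linarith⟩

lemma mn_pos {K : Type*} [Field K] (f : AbsoluteValue K ℝ) {z : K} (h0 : z ≠ 0) (h1 : z ≠ 1) :
    0 < mn f z := by
  have := f.pos h0
  have := f.pos (sub_ne_zero.mpr h1.symm)
  simp [mn, *]

lemma mn_le_MM {K : Type*} [Field K] (f : AbsoluteValue K ℝ) (z : K) : mn f z ≤ MM f z := by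
  simp [mn, MM]

lemma loc_upper {K : Type*} [Field K] (f : AbsoluteValue K ℝ) (z : K) :
    f z * f (1 - z) ≤ MM f z ^ 2 * mn f z := by
  have hx := f.nonneg z
  have hy := f.nonneg (1 - z)
  unfold MM mn
  set x := f z
  set y := f (1 - z)
  rcases le_total x y with h | h
  · rw [max_eq_right h, min_eq_left h]
    rcases le_total y 1 with h' | h'
    · rw [max_eq_right h', min_eq_left (h.trans h')]; nlinarith
    · rw [max_eq_left h']
      rcases le_total x 1 with h'' | h''
      · rw [min_eq_left h'']; nlinarith [mul_nonneg (mul_nonneg hx hy) (sub_nonneg.2 h')]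
      · rw [min_eq_right h'']; nlinarith
  · rw [max_eq_left h, min_eq_right h]
    rcases le_total x 1 with h' | h'
    · rw [max_eq_right h', min_eq_left (h.trans h')]; nlinarith
    · rw [max_eq_left h']
      rcases le_total y 1 with h'' | h''
      · rw [min_eq_left h'']; nlinarith [mul_nonneg (mul_nonneg hx hy) (sub_nonneg.2 h')]
      · rw [min_eq_right h'']; nlinarith

lemma loc_lower {K : Type*} [Field K] {f : AbsoluteValue K ℝ} {A : ℝ} (hA : AV f A) (z : K) :
    MM f z ^ 2 * mn f z ≤ A * (f z * f (1 - z)) := by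
  have hx := f.nonneg z
  have hy := f.nonneg (1 - z)
  have e1 : f z ≤ A * max (f (1 - z)) 1 := by
    have := hA.sub_le 1 (1 - z) (B := max (f (1-z)) 1) (by simp) (by simp)
    simpa using this
  have e2 : f (1 - z) ≤ A * max (f z) 1 :=
    hA.sub_le 1 z (B := max (f z) 1) (by simp) (by simp)
  have e3 : 1 ≤ A * max (f z) (f (1 - z)) := by
    have := hA.add_le z (1 - z) (B := max (f z) (f (1 - z))) (by simp) (by simp)
    simpa using this
  unfold MM mn
  have h1 := hA.one_le
  clear hA
  generalize f z = x at *
  generalize f (1 - z) = y at *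
  rcases le_total x y with h | h
  · rw [max_eq_right h, min_eq_left h]
    rw [max_eq_right h] at e3
    rcases le_total y 1 with h' | h'
    · rw [max_eq_right h', min_eq_left (h.trans h')]; nlinarith
    · rw [max_eq_left h']
      rcases le_total x 1 with h'' | h''
      · rw [min_eq_left h'']; rw [max_eq_right h''] at e2; nlinarith [mul_nonneg hx hy]
      · rw [min_eq_right h'']; rw [max_eq_left h''] at e2; nlinarith
  · rw [max_eq_left h, min_eq_right h]
    rw [max_eq_left h] at e3
    rcases le_total x 1 with h' | h'
    · rw [max_eq_right h', min_eq_left (h.trans h')]; nlinarith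
    · rw [max_eq_left h']
      rcases le_total y 1 with h'' | h''
      · rw [min_eq_left h'']; rw [max_eq_right h''] at e1; nlinarith [mul_nonneg hx hy]
      · rw [min_eq_right h'']; rw [max_eq_left h''] at e1; nlinarith

variable {K W : Type*} [Field K] [Fintype W]

/-- The abstract situation: places `W`, a subset `S` containing the archimedean ones, and a set `Z`
of solutions of an `S`-unit type equation. -/
structure PD (K W : Type*) [Field K] [Fintype W] where
  av : W → AbsoluteValue K ℝ
  wt : W → ℝ
  wt_nonneg : ∀ w, 0 ≤ wt w
  A : W → ℝ
  hA : ∀ w, AV (av w) (A w)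
  S : Finset W
  Z : Set K
  Z0 : ∀ z ∈ Z, z ≠ 0
  Z1 : ∀ z ∈ Z, z ≠ 1
  fix0 : ∀ z ∈ Z, ∀ z' ∈ Z, ∀ w, w ∉ S → av w z = av w z'
  fix1 : ∀ z ∈ Z, ∀ z' ∈ Z, ∀ w, w ∉ S → av w (1 - z) = av w (1 - z')
  O : Subring K
  PF : ∀ D ∈ O, D ≠ 0 → 0 ≤ ∑ w, wt w * Real.log (av w D)
  ZO : ∀ z ∈ Z, z ∈ O
  ZO0 : ∀ z ∈ Z, z⁻¹ ∈ O
  ZO1 : ∀ z ∈ Z, (1 - z)⁻¹ ∈ O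
  emb : ∀ w, A w ≠ 1 → w ∈ S ∧ ∃ σ : K →+* ℂ, ∀ x, av w x = ‖σ x‖
  pos : ∃ w, A w ≠ 1 ∧ 0 < wt w

namespace PD
variable (P : PD K W)

noncomputable def Lam : ℝ := ∑ w, P.wt w * Real.log (P.A w)
noncomputable def tau (w : W) (z : K) : ℝ := Real.log (MM (P.av w) z) - Real.log (mn (P.av w) z)
noncomputable def t (w : W) (z : K) : ℝ := P.wt w * P.tau w z
noncomputable def h (z : K) : ℝ := ∑ w, P.wt w * Real.log (MM (P.av w) z)
noncomputable def th (z : K) : ℝ := ∑ w, P.t w z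
noncomputable def idx (w : W) (z : K) : Fin 3 := idxr (P.av w z) (P.av w (1 - z))

lemma Lam_pos : 0 < P.Lam := by
  obtain ⟨w, h1, h2⟩ := P.pos
  unfold Lam
  apply Finset.sum_pos'
  · intro w _
    exact mul_nonneg (P.wt_nonneg w) (Real.log_nonneg (P.hA w).one_le)
  · refine ⟨w, Finset.mem_univ _, mul_pos h2 (Real.log_pos ?_)⟩
    exact lt_of_le_of_ne (P.hA w).one_le (Ne.symm h1)

variable {P}
variable {z z' : K}

lemma tau_nonneg (hz : z ∈ P.Z) (w : W) : 0 ≤ P.tau w z := by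
  unfold tau
  have := Real.log_le_log (mn_pos (P.av w) (P.Z0 z hz) (P.Z1 z hz)) (mn_le_MM (P.av w) z)
  linarith

lemma t_nonneg (hz : z ∈ P.Z) (w : W) : 0 ≤ P.t w z :=
  mul_nonneg (P.wt_nonneg w) (tau_nonneg hz w)

lemma th_nonneg (hz : z ∈ P.Z) : 0 ≤ P.th z := Finset.sum_nonneg fun w _ => t_nonneg hz w

lemma h_nonneg (z : K) : 0 ≤ P.h z := Finset.sum_nonneg fun w _ =>
  mul_nonneg (P.wt_nonneg w) (Real.log_nonneg (one_le_MM _ _))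

lemma t_out (hz : z ∈ P.Z) (hz' : z' ∈ P.Z) {w : W} (hw : w ∉ P.S) : P.t w z = P.t w z' := by
  simp only [t, tau, MM, mn, P.fix0 z hz z' hz' w hw, P.fix1 z hz z' hz' w hw]

lemma idx_out (hz : z ∈ P.Z) (hz' : z' ∈ P.Z) {w : W} (hw : w ∉ P.S) : P.idx w z = P.idx w z' := by
  simp only [idx, P.fix0 z hz z' hz' w hw, P.fix1 z hz z' hz' w hw]

lemma ZO1' (hz : z ∈ P.Z) : 1 - z ∈ P.O := P.O.sub_mem P.O.one_mem (P.ZO z hz)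

lemma sum_unit {x : K} (hx : x ∈ P.O) (hx' : x⁻¹ ∈ P.O) (h0 : x ≠ 0) :
    ∑ w, P.wt w * Real.log (P.av w x) = 0 := by
  have h1 := P.PF x hx h0
  have h2 := P.PF _ hx' (inv_ne_zero h0)
  simp only [map_inv₀, Real.log_inv, mul_neg, Finset.sum_neg_distrib] at h2
  linarith

lemma sum_prod (hz : z ∈ P.Z) :
    ∑ w, P.wt w * Real.log (P.av w z * P.av w (1 - z)) = 0 := by
  have n0 := P.Z0 z hz
  have n1 := sub_ne_zero.mpr (P.Z1 z hz).symm
  have h1 := sum_unit (P.ZO z hz) (P.ZO0 z hz) n0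
  have h2 := sum_unit (ZO1' hz) (P.ZO1 z hz) n1
  rw [← add_zero (0 : ℝ)]
  nth_rw 1 [← h1]; rw [← h2, ← Finset.sum_add_distrib]
  refine Finset.sum_congr rfl fun w _ => ?_
  rw [Real.log_mul ((P.av w).ne_zero n0) ((P.av w).ne_zero n1)]; ring

lemma th_le (hz : z ∈ P.Z) : P.th z ≤ 3 * P.h z := by
  have n0 := P.Z0 z hz
  have n1 := P.Z1 z hz
  have s := sum_prod hz
  have : ∑ w, P.wt w * Real.log (P.av w z * P.av w (1 - z)) ≤ 3 * P.h z - P.th z := by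
    unfold h th t tau
    rw [Finset.mul_sum, ← Finset.sum_sub_distrib]
    refine Finset.sum_le_sum fun w _ => ?_
    rw [show 3 * (P.wt w * Real.log (MM (P.av w) z)) - P.wt w * (Real.log (MM (P.av w) z) -
      Real.log (mn (P.av w) z)) = P.wt w * (2 * Real.log (MM (P.av w) z) +
      Real.log (mn (P.av w) z)) by ring]
    refine mul_le_mul_of_nonneg_left ?_ (P.wt_nonneg w)
    have hM := one_le_MM (P.av w) z
    have hm := mn_pos (P.av w) n0 n1
    rw [show 2 * Real.log (MM (P.av w) z) = Real.log (MM (P.av w) z ^ 2) by simp,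
      ← Real.log_mul (by positivity) hm.ne']
    exact Real.log_le_log (mul_pos ((P.av w).pos n0) ((P.av w).pos (sub_ne_zero.mpr n1.symm)))
      (loc_upper _ _)
  linarith

lemma le_th (hz : z ∈ P.Z) : 3 * P.h z ≤ P.th z + P.Lam := by
  have n0 := P.Z0 z hz
  have n1 := P.Z1 z hz
  have s := sum_prod hz
  have : 3 * P.h z - P.th z - P.Lam ≤ ∑ w, P.wt w * Real.log (P.av w z * P.av w (1 - z)) := by
    unfold h th t tau Lam
    rw [Finset.mul_sum, ← Finset.sum_sub_distrib, ← Finset.sum_sub_distrib]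
    refine Finset.sum_le_sum fun w _ => ?_
    rw [show 3 * (P.wt w * Real.log (MM (P.av w) z)) - P.wt w * (Real.log (MM (P.av w) z) -
      Real.log (mn (P.av w) z)) - P.wt w * Real.log (P.A w) = P.wt w * (2 * Real.log (MM (P.av w) z)
      + Real.log (mn (P.av w) z) - Real.log (P.A w)) by ring]
    refine mul_le_mul_of_nonneg_left ?_ (P.wt_nonneg w)
    have hM := one_le_MM (P.av w) z
    have hm := mn_pos (P.av w) n0 n1
    have hA := (P.hA w).one_le
    have hp := mul_pos ((P.av w).pos n0) ((P.av w).pos (sub_ne_zero.mpr n1.symm))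
    rw [show 2 * Real.log (MM (P.av w) z) = Real.log (MM (P.av w) z ^ 2) by simp,
      ← Real.log_mul (by positivity) hm.ne', sub_le_iff_le_add, add_comm,
      ← Real.log_mul (by positivity) hp.ne']
    exact Real.log_le_log (by positivity) (loc_lower (P.hA w) _)
  linarith

lemma XX_mem (hz : z ∈ P.Z) (i : Fin 3) : XX z i ∈ P.O := by
  fin_cases i
  · exact P.ZO z hz
  · exact ZO1' hz
  · exact P.O.neg_mem P.O.one_mem

lemma XX_inv_mem (hz : z ∈ P.Z) (i : Fin 3) : (XX z i)⁻¹ ∈ P.O := by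
  fin_cases i
  · exact P.ZO0 z hz
  · exact P.ZO1 z hz
  · change (-1 : K)⁻¹ ∈ P.O
    rw [inv_neg, inv_one]; exact P.O.neg_mem P.O.one_mem

lemma rho_mem {N m : ℕ} {u v : K} (hu : u⁻¹ ∈ P.O) (hv : v⁻¹ ∈ P.O) : rho N m u v ∈ P.O := by
  rw [rho_eq]
  refine P.O.sum_mem fun p _ => ?_
  repeat' apply P.O.mul_mem
  all_goals first
    | exact P.O.pow_mem hu _
    | exact P.O.pow_mem hv _
    | exact P.O.pow_mem (P.O.neg_mem P.O.one_mem) _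
    | exact natCast_mem P.O _

lemma VV_mem (hz : z ∈ P.Z) {N : ℕ} {α β : K} (hα : α ∈ P.O) (hβ : β ∈ P.O) (i : Fin 3) :
    VV N α β z i ∈ P.O := by
  unfold VV
  refine P.O.mul_mem (P.O.pow_mem (P.O.mul_mem (P.O.mul_mem (XX_mem hz _) (XX_mem hz _))
    (XX_mem hz _)) _) ?_
  rw [res, resid, aa_sub1, aa_sub2]
  have h1 := XX_inv_mem hz (i+2)
  have h2 : (- XX z (i+1))⁻¹ ∈ P.O := by rw [inv_neg]; exact P.O.neg_mem (XX_inv_mem hz _)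
  have h3 : aa z i ∈ P.O := by
    fin_cases i
    · exact P.O.sub_mem (P.ZO z hz) P.O.one_mem
    · exact P.ZO z hz
    · exact P.O.zero_mem
  exact P.O.add_mem (P.O.mul_mem (P.O.add_mem hα (P.O.mul_mem hβ h3)) (rho_mem h1 h2))
    (P.O.mul_mem hβ (rho_mem h1 h2))

lemma DD_mem (hz : z ∈ P.Z) (hz' : z' ∈ P.Z) {N : ℕ} {α β : K} (hα : α ∈ P.O) (hβ : β ∈ P.O) :
    DD N α β z z' ∈ P.O :=
  P.O.sub_mem (P.O.mul_mem (VV_mem hz hα hβ _) (XX_mem hz' _))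
    (P.O.mul_mem (VV_mem hz hα hβ _) (XX_mem hz' _))

/-- logarithmic form of the local bound -/
lemma log_aux {d A M M' m m' : ℝ} (k c e : ℕ) (hd : 0 < d) (hA : 1 ≤ A) (hM : 1 ≤ M) (hM' : 1 ≤ M')
    (hm : 0 < m) (hm' : 0 < m')
    (hb : d ≤ A ^ c * M ^ e * max (m ^ k * M') (M ^ k * m')) :
    Real.log d ≤ c * Real.log A + (e + k) * Real.log M + Real.log M' -
      min (k * (Real.log M - Real.log m)) (Real.log M' - Real.log m') := by
  have hA0 : 0 < A := by linarith
  have hM0 : 0 < M := by linarith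
  have hM0' : 0 < M' := by linarith
  rcases max_choice (m ^ k * M') (M ^ k * m') with h | h
  · rw [h] at hb
    have := Real.log_le_log hd hb
    rw [Real.log_mul (by positivity) (by positivity), Real.log_mul (by positivity) (by positivity),
      Real.log_mul (by positivity) (by positivity), Real.log_pow, Real.log_pow, Real.log_pow] at this
    have h2 := min_le_left (k * (Real.log M - Real.log m)) (Real.log M' - Real.log m')
    linarith
  · rw [h] at hb
    have := Real.log_le_log hd hb
    rw [Real.log_mul (by positivity) (by positivity), Real.log_mul (by positivity) (by positivity),
      Real.log_mul (by positivity) (by positivity), Real.log_pow, Real.log_pow, Real.log_pow] at this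
    have h2 := min_le_right (k * (Real.log M - Real.log m)) (Real.log M' - Real.log m')
    linarith

lemma sum_aux (hz : z ∈ P.Z) (hz' : z' ∈ P.Z) (k c e : ℕ) (D : K) (hD : D ∈ P.O) (hD0 : D ≠ 0)
    (hb : ∀ w, P.av w D ≤ P.A w ^ c * MM (P.av w) z ^ e *
      max (mn (P.av w) z ^ k * MM (P.av w) z') (MM (P.av w) z ^ k * mn (P.av w) z')) :
    ∑ w, min (k * P.t w z) (P.t w z') ≤ (e + k) * P.h z + P.h z' + c * P.Lam := by
  have h1 := P.PF D hD hD0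
  have h2 : ∑ w, P.wt w * Real.log (P.av w D) ≤ c * P.Lam + (e + k) * P.h z + P.h z' -
      ∑ w, min (k * P.t w z) (P.t w z') := by
    unfold Lam h
    rw [Finset.mul_sum, Finset.mul_sum, ← Finset.sum_add_distrib, ← Finset.sum_add_distrib,
      ← Finset.sum_sub_distrib]
    refine Finset.sum_le_sum fun w _ => ?_
    have h3 := log_aux k c e ((P.av w).pos hD0) (P.hA w).one_le (one_le_MM (P.av w) z)
      (one_le_MM (P.av w) z') (mn_pos _ (P.Z0 z hz) (P.Z1 z hz))
      (mn_pos _ (P.Z0 z' hz') (P.Z1 z' hz')) (hb w)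
    have h4 := mul_le_mul_of_nonneg_left h3 (P.wt_nonneg w)
    have h5 : min (k * P.t w z) (P.t w z') = P.wt w * min (k * P.tau w z) (P.tau w z') := by
      rw [mul_min_of_nonneg _ _ (P.wt_nonneg w), t, t]; congr 1; ring
    rw [h5]
    refine h4.trans (le_of_eq ?_)
    unfold tau; ring
  linarith

lemma MI [CharZero K] (hz : z ∈ P.Z) (hz' : z' ∈ P.Z) (hi : ∀ w ∈ P.S, P.idx w z = P.idx w z')
    (N : ℕ) (hN : 1 ≤ N) :
    ∑ w, min ((2 * N + 1) * P.t w z) (P.t w z') ≤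
      (3 * N + 2) * P.h z + P.h z' + (5 * N + 2) * P.Lam := by
  have hi' : ∀ w, P.idx w z = P.idx w z' := fun w => by
    by_cases hw : w ∈ P.S
    · exact hi w hw
    · exact idx_out hz hz' hw
  have key : ∀ α β : K, ((α = 1 ∧ β = 0) ∨ (α = 0 ∧ β = 1)) → DD N α β z z' ≠ 0 → 
    ∑ w, min ((2 * N + 1) * P.t w z) (P.t w z') ≤
      (3 * N + 2) * P.h z + P.h z' + (5 * N + 2) * P.Lam := by
    intro α β hαβ hD
    have hα : α ∈ P.O := by
      rcases hαβ with ⟨rfl, _⟩ | ⟨rfl, _⟩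
      · exact P.O.one_mem
      · exact P.O.zero_mem
    have hβ : β ∈ P.O := by
      rcases hαβ with ⟨_, rfl⟩ | ⟨_, rfl⟩
      · exact P.O.zero_mem
      · exact P.O.one_mem
    have := sum_aux hz hz' (2 * N + 1) (5 * N + 2) (N + 1) _ (DD_mem hz hz' hα hβ) hD (fun w => by
      have hb := DD_bound (P.hA w) (z' := z') (P.Z0 z hz) (P.Z1 z hz) N hN α β hαβ (P.idx w z)
      have e1 : P.av w (XX z (P.idx w z)) = mn (P.av w) z := mn_eq _ _
      have e2 : P.av w (XX z' (P.idx w z)) = mn (P.av w) z' := by rw [hi' w]; exact mn_eq _ _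
      rwa [e1, e2] at hb)
    push_cast at this
    refine this.trans (le_of_eq ?_)
    ring
  rcases DD_ne (z' := z') (P.Z0 z hz) (P.Z1 z hz) N hN with h | h
  · exact key 1 0 (by simp) h
  · exact key 0 1 (by simp) h

lemma MI0 (hz : z ∈ P.Z) (hz' : z' ∈ P.Z) (hi : ∀ w ∈ P.S, P.idx w z = P.idx w z') (hne : z ≠ z') :
    ∑ w, min (P.t w z) (P.t w z') ≤ P.h z + P.h z' + P.Lam := by
  have hi' : ∀ w, P.idx w z = P.idx w z' := fun w => by
    by_cases hw : w ∈ P.S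
    · exact hi w hw
    · exact idx_out hz hz' hw
  have := sum_aux hz hz' 1 1 0 _ (P.O.sub_mem (P.ZO z hz) (P.ZO z' hz')) (sub_ne_zero.mpr hne)
    (fun w => by
      have hb := D0_bound (P.hA w) z z' (P.idx w z)
      have e1 : P.av w (XX z (P.idx w z)) = mn (P.av w) z := mn_eq _ _
      have e2 : P.av w (XX z' (P.idx w z)) = mn (P.av w) z' := by rw [hi' w]; exact mn_eq _ _
      rw [e1, e2] at hb
      simpa using hb)
  simpa using this

end PD
end global
end TPL

end

section

namespace TPL

lemma cell_count (ι : Type*) [Fintype ι] [DecidableEq ι] (s : ℕ) (hs : Fintype.card ι = s) :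
    ((Fintype.piFinset fun _ : ι => Finset.range (20 * s + 1)).filter
      (fun g => ∑ i, g i ≤ 20 * s)).card ≤ 56 ^ s := by
  set G := (Fintype.piFinset fun _ : ι => Finset.range (20 * s + 1)).filter
      (fun g => ∑ i, g i ≤ 20 * s)
  have geo : ∑ k ∈ Finset.range (20 * s + 1), (20 / 21 : ℝ) ^ k ≤ 21 := by
    have := mul_neg_geom_sum (20 / 21 : ℝ) (20 * s + 1)
    have hp : (0 : ℝ) < (20 / 21 : ℝ) ^ (20 * s + 1) := by positivity
    linarith
  have h1 : (G.card : ℝ) * (20 / 21 : ℝ) ^ (20 * s) ≤ 21 ^ s := by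
    calc (G.card : ℝ) * (20 / 21 : ℝ) ^ (20 * s) = ∑ g ∈ G, (20 / 21 : ℝ) ^ (20 * s) := by
          rw [Finset.sum_const, nsmul_eq_mul]
      _ ≤ ∑ g ∈ G, ∏ i, (20 / 21 : ℝ) ^ (g i) := by
          refine Finset.sum_le_sum fun g hg => ?_
          rw [Finset.prod_pow_eq_pow_sum]
          exact pow_le_pow_of_le_one (by norm_num) (by norm_num) (Finset.mem_filter.mp hg).2
      _ ≤ ∑ g ∈ Fintype.piFinset fun _ : ι => Finset.range (20 * s + 1),
            ∏ i, (20 / 21 : ℝ) ^ (g i) :=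
          Finset.sum_le_sum_of_subset_of_nonneg (Finset.filter_subset _ _)
            fun g _ _ => Finset.prod_nonneg fun i _ => by positivity
      _ = ∏ _i : ι, ∑ k ∈ Finset.range (20 * s + 1), (20 / 21 : ℝ) ^ k :=
          (Finset.prod_univ_sum (fun _ => Finset.range (20 * s + 1))
            (fun _ k => (20 / 21 : ℝ) ^ k)).symm
      _ = (∑ k ∈ Finset.range (20 * s + 1), (20 / 21 : ℝ) ^ k) ^ s := by
          rw [Finset.prod_const, Finset.card_univ, hs]
      _ ≤ 21 ^ s := pow_le_pow_left₀ (Finset.sum_nonneg fun i _ => by positivity) geo _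
  have h2 : (21 / 56 : ℝ) ^ s ≤ (20 / 21 : ℝ) ^ (20 * s) := by
    rw [pow_mul]; exact pow_le_pow_left₀ (by norm_num) (by norm_num) _
  have h3 : (G.card : ℝ) * (21 / 56 : ℝ) ^ s ≤ 21 ^ s :=
    (mul_le_mul_of_nonneg_left h2 (by positivity)).trans h1
  have h4 : (21 : ℝ) ^ s = 56 ^ s * (21 / 56) ^ s := by rw [← mul_pow]; norm_num
  rw [h4] at h3
  have := le_of_mul_le_mul_right h3 (by positivity)
  exact_mod_cast this

lemma window_count {α : Type*} (F : Finset α) (θ : α → ℝ) (c : ℝ) (hc : 0 < c)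
    (h1 : ∀ x ∈ F, c ≤ θ x) (h2 : ∀ x ∈ F, θ x < 20 * c)
    (hg : ∀ x ∈ F, ∀ y ∈ F, x ≠ y → θ x ≤ θ y → 1.16 * θ x ≤ θ y) : F.card ≤ 21 := by
  classical
  have hl : (0 : ℝ) < Real.log 1.16 := Real.log_pos (by norm_num)
  have hpos : ∀ x ∈ F, 0 < θ x := fun x hx => lt_of_lt_of_le hc (h1 x hx)
  have hnn : ∀ x ∈ F, 0 ≤ Real.log (θ x / c) / Real.log 1.16 := fun x hx =>
    div_nonneg (Real.log_nonneg ((one_le_div hc).mpr (h1 x hx))) hl.le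
  have key : ∀ x ∈ F, ∀ y ∈ F, x ≠ y → θ x ≤ θ y →
      ⌊Real.log (θ x / c) / Real.log 1.16⌋₊ ≠ ⌊Real.log (θ y / c) / Real.log 1.16⌋₊ := by
    intro x hx y hy hxy hle heq
    have e := hg x hx y hy hxy hle
    have l1 := Nat.floor_le (hnn x hx)
    have l2 := Nat.lt_floor_add_one (Real.log (θ y / c) / Real.log 1.16)
    rw [← heq] at l2
    have l3 : Real.log (θ x / c) / Real.log 1.16 + 1 ≤ Real.log (θ y / c) / Real.log 1.16 := by
      rw [div_add_one hl.ne', div_le_div_iff_of_pos_right hl,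
        ← Real.log_mul (div_pos (hpos x hx) hc).ne' (by norm_num)]
      apply Real.log_le_log (mul_pos (div_pos (hpos x hx) hc) (by norm_num))
      rw [div_mul_eq_mul_div, div_le_div_iff_of_pos_right hc]; linarith
    linarith
  have : F.card ≤ (Finset.range 21).card := by
    refine Finset.card_le_card_of_injOn (fun x => ⌊Real.log (θ x / c) / Real.log 1.16⌋₊) ?_ ?_
    · intro x hx
      have hx : x ∈ F := hx
      simp only [Finset.coe_range, Set.mem_Iio]
      rw [Nat.floor_lt (hnn x hx), div_lt_iff₀ hl]
      have : Real.log (θ x / c) < Real.log (1.16 ^ 21) := by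
        apply Real.log_lt_log (div_pos (hpos x hx) hc)
        rw [div_lt_iff₀ hc]
        have := h2 x hx
        have h3 : (20 : ℝ) < 1.16 ^ 21 := by norm_num
        nlinarith
      rw [Real.log_pow] at this
      exact_mod_cast this
    · intro x hx y hy hxy
      by_contra hne
      rcases le_total (θ x) (θ y) with h | h
      · exact key x hx y hy hne h hxy
      · exact key y hy x hx (Ne.symm hne) h hxy.symm
  simpa using this

namespace PD
variable {K W : Type*} [Field K] [Fintype W] {P : PD K W} {z z' : K}

noncomputable def gg (P : PD K W) (w : W) (z : K) : ℕ := ⌊20 * (P.S.card : ℝ) * P.t w z / P.th z⌋₊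

lemma S_pos (P : PD K W) : 1 ≤ P.S.card := by
  obtain ⟨w, h, _⟩ := P.pos
  exact Finset.card_pos.mpr ⟨w, (P.emb w h).1⟩

lemma sum_S_le (hz : z ∈ P.Z) : ∑ w ∈ P.S, P.t w z ≤ P.th z :=
  Finset.sum_le_sum_of_subset_of_nonneg (Finset.subset_univ _) fun w _ _ => t_nonneg hz w

lemma gg_sum (hz : z ∈ P.Z) (hp : 0 < P.th z) : ∑ w ∈ P.S, P.gg w z ≤ 20 * P.S.card := by
  have : (∑ w ∈ P.S, (P.gg w z : ℝ)) ≤ 20 * P.S.card := by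
    calc (∑ w ∈ P.S, (P.gg w z : ℝ)) ≤ ∑ w ∈ P.S, 20 * (P.S.card : ℝ) * P.t w z / P.th z :=
          Finset.sum_le_sum fun w _ => Nat.floor_le
            (div_nonneg (mul_nonneg (by positivity) (t_nonneg hz w)) hp.le)
      _ = 20 * P.S.card * (∑ w ∈ P.S, P.t w z) / P.th z := by
          rw [Finset.mul_sum, Finset.sum_div]
      _ ≤ _ := by
          rw [div_le_iff₀ hp]
          exact mul_le_mul_of_nonneg_left (sum_S_le hz) (by positivity)
  exact_mod_cast this

lemma gg_le (hz : z ∈ P.Z) (hp : 0 < P.th z) (w : W) :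
    (P.gg w z : ℝ) / (20 * P.S.card) * P.th z ≤ P.t w z := by
  have hs : (0 : ℝ) < P.S.card := by exact_mod_cast P.S_pos
  have := Nat.floor_le (a := 20 * (P.S.card : ℝ) * P.t w z / P.th z)
    (div_nonneg (mul_nonneg (by positivity) (t_nonneg hz w)) hp.le)
  rw [le_div_iff₀ hp] at this
  rw [div_mul_eq_mul_div, div_le_iff₀ (by positivity)]
  unfold gg; linarith

lemma lt_gg (hp : 0 < P.th z) (w : W) :
    P.t w z ≤ ((P.gg w z : ℝ) / (20 * P.S.card) + 1 / (20 * P.S.card)) * P.th z := by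
  have hs : (0 : ℝ) < P.S.card := by exact_mod_cast P.S_pos
  have := (Nat.lt_floor_add_one (20 * (P.S.card : ℝ) * P.t w z / P.th z)).le
  rw [div_le_iff₀ hp] at this
  rw [← add_div, div_mul_eq_mul_div, le_div_iff₀ (by positivity)]
  unfold gg; linarith

lemma cell (hz : z ∈ P.Z) (hz' : z' ∈ P.Z) (hp : 0 < P.th z) (hp' : 0 < P.th z')
    (hg : ∀ w ∈ P.S, P.gg w z = P.gg w z') {k : ℝ} (hk : 1 ≤ k) :
    19 / 20 * min (k * P.th z) (P.th z') ≤ ∑ w, min (k * P.t w z) (P.t w z') := by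
  classical
  have hs : (0 : ℝ) < P.S.card := by exact_mod_cast P.S_pos
  set m := min (k * P.th z) (P.th z')
  have hm1 : m ≤ k * P.th z := min_le_left _ _
  have hm2 : m ≤ P.th z' := min_le_right _ _
  have hm0 : 0 < m := lt_min (by positivity) hp'
  set Γ : ℝ := ∑ w ∈ P.S, (P.gg w z' : ℝ) / (20 * P.S.card)
  have b1 : Γ * m ≤ ∑ w ∈ P.S, min (k * P.t w z) (P.t w z') := by
    rw [Finset.sum_mul]
    refine Finset.sum_le_sum fun w hw => ?_
    have hc : 0 ≤ (P.gg w z' : ℝ) / (20 * P.S.card) := by positivity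
    apply le_min
    · have := gg_le hz hp w
      rw [hg w hw] at this
      calc _ ≤ (P.gg w z' : ℝ) / (20 * P.S.card) * (k * P.th z) := mul_le_mul_of_nonneg_left hm1 hc
        _ = k * ((P.gg w z' : ℝ) / (20 * P.S.card) * P.th z) := by ring
        _ ≤ _ := mul_le_mul_of_nonneg_left this (by linarith)
    · exact (mul_le_mul_of_nonneg_left hm2 hc).trans (gg_le hz' hp' w)
  have b2 : ∑ w ∈ P.S, P.t w z' ≤ (Γ + 1 / 20) * P.th z' := by
    calc _ ≤ ∑ w ∈ P.S, ((P.gg w z' : ℝ) / (20 * P.S.card) + 1 / (20 * P.S.card)) * P.th z' :=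
          Finset.sum_le_sum fun w _ => lt_gg hp' w
      _ = _ := by
          rw [← Finset.sum_mul, Finset.sum_add_distrib, Finset.sum_const, nsmul_eq_mul]
          congr 2; field_simp
  have b3 : ∑ w ∈ P.Sᶜ, min (k * P.t w z) (P.t w z') = ∑ w ∈ P.Sᶜ, P.t w z' := by
    refine Finset.sum_congr rfl fun w hw => ?_
    rw [t_out hz hz' (Finset.mem_compl.mp hw)]
    apply min_eq_right
    have := t_nonneg hz' w
    nlinarith
  have b4 : ∑ w ∈ P.S, P.t w z' + ∑ w ∈ P.Sᶜ, P.t w z' = P.th z' :=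
    Finset.sum_add_sum_compl _ _
  have b5 : 0 ≤ ∑ w ∈ P.Sᶜ, P.t w z' := Finset.sum_nonneg fun w _ => t_nonneg hz' w
  rw [← Finset.sum_add_sum_compl P.S, b3]
  rcases le_total Γ (19 / 20) with h | h
  · nlinarith
  · nlinarith

lemma gap (hz : z ∈ P.Z) (hz' : z' ∈ P.Z) (hi : ∀ w ∈ P.S, P.idx w z = P.idx w z')
    (hg : ∀ w ∈ P.S, P.gg w z = P.gg w z') (hne : z ≠ z') (h1 : 7.25 * P.Lam ≤ P.th z)
    (h2 : P.th z ≤ P.th z') : 1.16 * P.th z ≤ P.th z' := by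
  have hL := P.Lam_pos
  have hp : 0 < P.th z := by linarith
  have c := cell hz hz' hp (by linarith) hg le_rfl
  have m := MI0 hz hz' hi hne
  simp only [one_mul] at c
  rw [min_eq_left h2] at c
  have e1 := le_th hz
  have e2 := le_th hz'
  linarith

lemma large [CharZero K] (hz : z ∈ P.Z) (hz' : z' ∈ P.Z) (hi : ∀ w ∈ P.S, P.idx w z = P.idx w z')
    (hg : ∀ w ∈ P.S, P.gg w z = P.gg w z') (h1 : 145 * P.Lam ≤ P.th z) :
    P.th z' < 20 * P.th z := by
  by_contra hcon
  push Not at hcon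
  have hL := P.Lam_pos
  have hp : 0 < P.th z := by linarith
  set N := ⌊(P.th z' / P.th z - 1) / 2⌋₊ with hNdef
  have hq : 20 ≤ P.th z' / P.th z := by rw [le_div_iff₀ hp]; exact hcon
  have l1 := Nat.floor_le (a := (P.th z' / P.th z - 1) / 2) (by linarith)
  have l2 := Nat.lt_floor_add_one ((P.th z' / P.th z - 1) / 2)
  rw [← hNdef] at l1 l2
  have hN : 9 ≤ N := Nat.le_floor (by norm_num; linarith)
  have l3 : (2 * N + 1) * P.th z ≤ P.th z' := by rw [← le_div_iff₀ hp]; linarith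
  have l4 : P.th z' ≤ (2 * N + 3) * P.th z := by rw [← div_le_iff₀ hp]; linarith
  have hNr : (9 : ℝ) ≤ N := by exact_mod_cast hN
  have c := cell hz hz' hp (by linarith) hg (k := 2 * N + 1) (by linarith)
  rw [min_eq_left l3] at c
  have m := MI hz hz' hi N (by omega)
  have e1 := le_th hz
  have e2 := le_th hz'
  have e3 : (3 * N + 2) * P.h z ≤ (3 * N + 2) * ((P.th z + P.Lam) / 3) :=
    mul_le_mul_of_nonneg_left (by linarith) (by positivity)
  have e4 : (N : ℝ) * (145 * P.Lam) ≤ N * P.th z := mul_le_mul_of_nonneg_left h1 (by positivity)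
  have e5 : 9 * P.th z ≤ N * P.th z := mul_le_mul_of_nonneg_right hNr hp.le
  nlinarith

/-- number of large solutions -/
lemma large_count [CharZero K] (F : Finset K) (hF : ∀ z ∈ F, z ∈ P.Z)
    (hl : ∀ z ∈ F, 7.25 * P.Lam ≤ P.th z) : F.card ≤ 42 * 168 ^ P.S.card := by
  classical
  have hL := P.Lam_pos
  let G := (Finset.univ : Finset (P.S → Fin 3)) ×ˢ
    ((Fintype.piFinset fun _ : P.S => Finset.range (20 * P.S.card + 1)).filter
      (fun g => ∑ i, g i ≤ 20 * P.S.card))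
  have hG : G.card ≤ 168 ^ P.S.card := by
    have := cell_count P.S P.S.card (by simp)
    rw [Finset.card_product, Finset.card_univ, Fintype.card_fun, Fintype.card_fin,
      Fintype.card_coe]
    calc _ ≤ 3 ^ P.S.card * 56 ^ P.S.card := Nat.mul_le_mul_left _ this
      _ = _ := by rw [← mul_pow]; norm_num
  let φ : K → (P.S → Fin 3) × (P.S → ℕ) := fun z => (fun w => P.idx w z, fun w => P.gg w z)
  refine (Finset.card_le_mul_card_image_of_maps_to (f := φ) (t := G) ?_ 42 ?_).trans
    (Nat.mul_le_mul_left _ hG)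
  · intro z hz
    have hs := gg_sum (hF z hz) (by have := hl z hz; linarith)
    rw [← Finset.sum_coe_sort] at hs
    simp only [G, φ, Finset.mem_product, Finset.mem_univ, true_and, Finset.mem_filter,
      Fintype.mem_piFinset, Finset.mem_range]
    refine ⟨fun w => ?_, hs⟩
    have := Finset.single_le_sum (f := fun w : P.S => P.gg w z) (fun _ _ => Nat.zero_le _)
      (Finset.mem_univ w)
    omega
  · intro b _
    set E := F.filter (fun a => φ a = b)
    have hE : ∀ z ∈ E, z ∈ F := fun z hz => (Finset.mem_filter.mp hz).1
    have same : ∀ z ∈ E, ∀ z' ∈ E, (∀ w ∈ P.S, P.idx w z = P.idx w z') ∧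
        (∀ w ∈ P.S, P.gg w z = P.gg w z') := by
      intro z hz z' hz'
      have e : φ z = φ z' := (Finset.mem_filter.mp hz).2.trans (Finset.mem_filter.mp hz').2.symm
      have e1 := congrArg Prod.fst e
      have e2 := congrArg Prod.snd e
      exact ⟨fun w hw => congrFun e1 ⟨w, hw⟩, fun w hw => congrFun e2 ⟨w, hw⟩⟩
    have hgap : ∀ x ∈ E, ∀ y ∈ E, x ≠ y → P.th x ≤ P.th y → 1.16 * P.th x ≤ P.th y := by
      intro x hx y hy hxy hle
      exact gap (hF x (hE x hx)) (hF y (hE y hy)) (same x hx y hy).1 (same x hx y hy).2 hxy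
        (hl x (hE x hx)) hle
    have c1 : (E.filter (fun z => P.th z < 20 * (7.25 * P.Lam))).card ≤ 21 := by
      refine window_count _ P.th (7.25 * P.Lam) (by positivity) ?_ ?_ ?_
      · exact fun x hx => hl x (hE x (Finset.mem_filter.mp hx).1)
      · exact fun x hx => (Finset.mem_filter.mp hx).2
      · exact fun x hx y hy => hgap x (Finset.mem_filter.mp hx).1 y (Finset.mem_filter.mp hy).1
    have c2 : (E.filter (fun z => ¬ P.th z < 20 * (7.25 * P.Lam))).card ≤ 21 := by
      set E2 := E.filter (fun z => ¬ P.th z < 20 * (7.25 * P.Lam))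
      rcases E2.eq_empty_or_nonempty with h0 | h0
      · rw [h0]; simp
      obtain ⟨x0, hx0, hmin⟩ := Finset.exists_min_image E2 P.th h0
      have hx0' := Finset.mem_filter.mp hx0
      have h145 : 145 * P.Lam ≤ P.th x0 := by have := hx0'.2; push Not at this; linarith
      refine window_count _ P.th (P.th x0) (by linarith) hmin ?_ ?_
      · intro y hy
        have hy' := (Finset.mem_filter.mp hy).1
        exact large (hF _ (hE _ hx0'.1)) (hF _ (hE _ hy')) (same _ hx0'.1 _ hy').1
          (same _ hx0'.1 _ hy').2 h145
      · exact fun x hx y hy => hgap x (Finset.mem_filter.mp hx).1 y (Finset.mem_filter.mp hy).1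
    have := Finset.card_filter_add_card_filter_not (s := E) (fun z => P.th z < 20 * (7.25 * P.Lam))
    omega

end PD
end TPL

end

section

namespace TPL

noncomputable def reg (a : ℂ) : Bool × ℤ × ℤ :=
  open Classical in
  if ‖a‖ ≤ 1 then (true, ⌊64 * a.re⌋, ⌊64 * a.im⌋) else (false, ⌊64 * a⁻¹.re⌋, ⌊64 * a⁻¹.im⌋)

lemma floor_mem {x : ℝ} (h : |x| ≤ 1) {n : ℤ} (hn : n = 64) :
    ⌊64 * x⌋ ∈ Finset.Icc (-n) n := by
  rw [abs_le] at h
  have hn' : (n : ℝ) = 64 := by rw [hn]; norm_num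
  rw [Finset.mem_Icc]
  constructor
  · rw [Int.le_floor]; push_cast; linarith
  · have h2 := Int.floor_le (64 * x)
    have h3 : ((⌊64 * x⌋ : ℤ) : ℝ) ≤ (n : ℝ) := by linarith
    exact_mod_cast h3

noncomputable def RR (n : ℤ) : Finset (Bool × ℤ × ℤ) := (Finset.univ : Finset Bool) ×ˢ
    (Finset.Icc (-n) n ×ˢ Finset.Icc (-n) n)

lemma RR_card {n : ℤ} (hn : n = 64) : (RR n).card = 33282 := by
  rw [RR, Finset.card_product, Finset.card_product, Int.card_Icc, Finset.card_univ,
    Fintype.card_bool, hn, show (64 + 1 - -64 : ℤ) = 129 by norm_num,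
    show Int.toNat 129 = 129 from rfl]

lemma mem_RR {b : Bool} {x y : ℝ} (hx : |x| ≤ 1) (hy : |y| ≤ 1) {n : ℤ} (hn : n = 64) :
    (b, ⌊64 * x⌋, ⌊64 * y⌋) ∈ RR n :=
  Finset.mem_product.mpr ⟨Finset.mem_univ _,
    Finset.mem_product.mpr ⟨floor_mem hx hn, floor_mem hy hn⟩⟩

lemma reg_mem (a : ℂ) {n : ℤ} (hn : n = 64) : reg a ∈ RR n := by
  by_cases h : ‖a‖ ≤ 1
  · rw [reg, if_pos h]
    exact mem_RR ((Complex.abs_re_le_norm a).trans h) ((Complex.abs_im_le_norm a).trans h) hn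
  · have h' : ‖a⁻¹‖ ≤ 1 := by
      rw [norm_inv]; exact inv_le_one_of_one_le₀ (by linarith)
    rw [reg, if_neg h]
    exact mem_RR ((Complex.abs_re_le_norm _).trans h') ((Complex.abs_im_le_norm _).trans h') hn

lemma floor_close {x y : ℝ} (h : ⌊64 * x⌋ = ⌊64 * y⌋) : (x - y) ^ 2 ≤ 1 / 64 ^ 2 := by
  have h1 := abs_lt.mp (Int.abs_sub_lt_one_of_floor_eq_floor h)
  rw [show (1 : ℝ) / 64 ^ 2 = (1 / 64) ^ 2 by norm_num]
  apply sq_le_sq'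
  · linarith
  · linarith

lemma norm_close {a b : ℂ} (h1 : ⌊64 * a.re⌋ = ⌊64 * b.re⌋) (h2 : ⌊64 * a.im⌋ = ⌊64 * b.im⌋) :
    ‖a - b‖ ^ 2 ≤ 1 / 2 ^ 11 := by
  rw [Complex.sq_norm, Complex.normSq_apply]
  have e1 := floor_close h1
  have e2 := floor_close h2
  simp only [Complex.sub_re, Complex.sub_im]
  nlinarith

lemma reg_close {a b : ℂ} (h : reg a = reg b) :
    ‖a - b‖ ^ 2 ≤ (max ‖a‖ 1 * max ‖b‖ 1) ^ 2 * (1 / 2 ^ 11) := by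
  unfold reg at h
  have m1 : 1 ≤ max ‖a‖ 1 := le_max_right _ _
  have m2 : 1 ≤ max ‖b‖ 1 := le_max_right _ _
  split_ifs at h with ha hb hb
  · simp only [Prod.mk.injEq, true_and] at h
    have := norm_close h.1 h.2
    have h3 : 1 ≤ (max ‖a‖ 1 * max ‖b‖ 1) ^ 2 := one_le_pow₀ (one_le_mul_of_one_le_of_one_le m1 m2)
    nlinarith
  · simp at h
  · simp at h
  · simp only [Prod.mk.injEq, true_and] at h
    have := norm_close h.1 h.2
    push Not at ha hb
    have ha0 : a ≠ 0 := by rintro rfl; simp at ha; linarith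
    have hb0 : b ≠ 0 := by rintro rfl; simp at hb; linarith
    have e : ‖a - b‖ = ‖a‖ * ‖b‖ * ‖a⁻¹ - b⁻¹‖ := by
      rw [← norm_mul, ← norm_mul, ← norm_neg]; congr 1; field_simp; ring
    rw [e, mul_pow, max_eq_left ha.le, max_eq_left hb.le]
    exact mul_le_mul_of_nonneg_left this (by positivity)

namespace PD
variable {K W : Type*} [Field K] [Fintype W] {P : PD K W} {z z' : K}

noncomputable def sig (P : PD K W) (w : W) (z : K) : ℂ :=
  open Classical in if h : P.A w ≠ 1 then (P.emb w h).2.choose z else 0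

lemma sig_spec (w : W) (h : P.A w ≠ 1) :
    (∀ z z', P.av w (z - z') = ‖P.sig w z - P.sig w z'‖) ∧ ∀ z, P.av w z = ‖P.sig w z‖ := by
  have := (P.emb w h).2.choose_spec
  refine ⟨fun z z' => ?_, fun z => ?_⟩
  · rw [this, map_sub]; simp only [sig, dif_pos h]
  · rw [this]; simp only [sig, dif_pos h]

lemma small_local (hr : ∀ w ∈ P.S, reg (P.sig w z) = reg (P.sig w z')) (hne : z ≠ z') (w : W) :
    Real.log (P.av w (z - z')) ≤ Real.log (MM (P.av w) z) + Real.log (MM (P.av w) z')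
      - 5.5 * Real.log (P.A w) := by
  have hM := one_le_MM (P.av w) z
  have hM' := one_le_MM (P.av w) z'
  have hd : 0 < P.av w (z - z') := (P.av w).pos (sub_ne_zero.mpr hne)
  by_cases hA : P.A w = 1
  · rw [hA, Real.log_one, mul_zero, sub_zero, ← Real.log_mul (by positivity) (by positivity)]
    apply Real.log_le_log hd
    have := D0_bound (P.hA w) z z' 2
    rw [hA, one_mul] at this
    refine this.trans (max_le ?_ ?_)
    · exact mul_le_mul_of_nonneg_right (XX_le _ _ _) (by positivity)
    · exact mul_le_mul_of_nonneg_left (XX_le _ _ _) (by positivity)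
  · obtain ⟨s1, s2⟩ := sig_spec w hA
    have hA2 : P.A w = 2 := by
      rcases P.hA w with ⟨h, _⟩ | h
      · exact absurd h hA
      · exact h
    have c := reg_close (hr w (P.emb w hA).1)
    rw [← s1, ← s2, ← s2] at c
    have c2 : P.av w (z - z') ^ 2 ≤ (MM (P.av w) z * MM (P.av w) z') ^ 2 * (1 / 2 ^ 11) := by
      refine c.trans ?_
      have k1 : max (P.av w z) 1 ≤ MM (P.av w) z :=
        max_le_max_right _ (le_max_left _ _)
      have k2 : max (P.av w z') 1 ≤ MM (P.av w) z' :=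
        max_le_max_right _ (le_max_left _ _)
      gcongr
    have l := Real.log_le_log (by positivity) c2
    rw [Real.log_mul (by positivity) (by positivity), Real.log_pow, Real.log_pow,
      Real.log_mul (by positivity) (by positivity), one_div, Real.log_inv, Real.log_pow] at l
    rw [hA2]
    push_cast at l
    linarith

lemma small (hz : z ∈ P.Z) (hz' : z' ∈ P.Z)
    (hr : ∀ w ∈ P.S, reg (P.sig w z) = reg (P.sig w z')) (hne : z ≠ z') :
    5.5 * P.Lam ≤ P.h z + P.h z' := by
  have h1 := P.PF _ (P.O.sub_mem (P.ZO z hz) (P.ZO z' hz')) (sub_ne_zero.mpr hne)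
  have h2 : ∑ w, P.wt w * Real.log (P.av w (z - z')) ≤ P.h z + P.h z' - 5.5 * P.Lam := by
    unfold h Lam
    rw [Finset.mul_sum, ← Finset.sum_add_distrib, ← Finset.sum_sub_distrib]
    refine Finset.sum_le_sum fun w _ => ?_
    have := mul_le_mul_of_nonneg_left (small_local hr hne w) (P.wt_nonneg w)
    linarith
  linarith

lemma small_count (F : Finset K) (hF : ∀ z ∈ F, z ∈ P.Z) (hs : ∀ z ∈ F, P.h z < 2.75 * P.Lam) :
    F.card ≤ 33282 ^ P.S.card := by
  classical
  obtain ⟨n, hn⟩ : ∃ n : ℤ, n = 64 := ⟨64, rfl⟩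
  have : F.card ≤ (Fintype.piFinset fun _ : P.S => RR n).card := by
    refine Finset.card_le_card_of_injOn (fun z (w : P.S) => reg (P.sig w z)) ?_ ?_
    · intro z _
      simp only [Finset.mem_coe, Fintype.mem_piFinset]
      exact fun w => reg_mem _ hn
    · intro z hz z' hz' he
      by_contra hne
      have := small (hF z hz) (hF z' hz') (fun w hw => congrFun he ⟨w, hw⟩) hne
      have h1 := hs z hz
      have h2 := hs z' hz'
      linarith
  refine this.trans (le_of_eq ?_)
  rw [Fintype.card_piFinset, Finset.prod_const, RR_card hn, Finset.card_univ, Fintype.card_coe]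

theorem count [CharZero K] (F : Finset K) (hF : ∀ z ∈ F, z ∈ P.Z) :
    F.card ≤ 2 ^ (16 * P.S.card) := by
  classical
  have h1 := small_count (P := P) (F.filter fun z => P.h z < 2.75 * P.Lam)
    (fun z hz => hF z (Finset.mem_filter.mp hz).1) (fun z hz => (Finset.mem_filter.mp hz).2)
  have h2 := large_count (P := P) (F.filter fun z => ¬ P.h z < 2.75 * P.Lam)
    (fun z hz => hF z (Finset.mem_filter.mp hz).1) (fun z hz => by
      have a := (Finset.mem_filter.mp hz).2
      have b := le_th (hF z (Finset.mem_filter.mp hz).1)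
      push Not at a; linarith)
  have h3 := Finset.card_filter_add_card_filter_not (s := F) (fun z => P.h z < 2.75 * P.Lam)
  have h4 := P.S_pos
  obtain ⟨s, hs⟩ : ∃ s, P.S.card = s + 1 := ⟨P.S.card - 1, by omega⟩
  rw [hs] at h1 h2 ⊢
  have a1 : 33282 ^ s ≤ 65536 ^ s := Nat.pow_le_pow_left (by norm_num) _
  have a2 : 168 ^ s ≤ 65536 ^ s := Nat.pow_le_pow_left (by norm_num) _
  rw [pow_succ] at h1 h2
  rw [pow_mul, show 2 ^ 16 = 65536 by norm_num, pow_succ]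
  omega

theorem finite_ncard [CharZero K] : P.Z.Finite ∧ P.Z.ncard ≤ 2 ^ (16 * P.S.card) := by
  have hfin : P.Z.Finite := by
    by_contra hinf
    obtain ⟨F, hF, hc⟩ := Set.Infinite.exists_subset_card_eq (s := P.Z) hinf
      (2 ^ (16 * P.S.card) + 1)
    have := count (P := P) F (fun z hz => hF hz)
    omega
  refine ⟨hfin, ?_⟩
  rw [Set.ncard_eq_toFinset_card _ hfin]
  exact count _ (fun z hz => (Set.Finite.mem_toFinset hfin).mp hz)

end PD
end TPL

end

section
namespace TPL
section numfield
open NumberField IsDedekindDomain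

variable {K : Type*} [Field K] [NumberField K]

/-- There is a prime outside any finite set. -/
lemma exists_prime_notMem (T : Finset (HeightOneSpectrum (𝓞 K))) :
    ∃ v : HeightOneSpectrum (𝓞 K), v ∉ T := by
  set m : ℕ := ∏ v ∈ T, Ideal.absNorm v.asIdeal
  have hm : 1 ≤ m := Finset.one_le_prod' fun v _ =>
    (NumberField.HeightOneSpectrum.one_lt_absNorm v).le
  have hnu : ¬ IsUnit ((m + 1 : ℕ) : 𝓞 K) := by
    rw [NumberField.isUnit_iff_norm, RingOfIntegers.coe_norm]
    have e : (((m + 1 : ℕ) : 𝓞 K) : K) = algebraMap ℚ K ((m + 1 : ℕ) : ℚ) := by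
      simp
    rw [e, Algebra.norm_algebraMap]
    have h2 : (1 : ℚ) < ((m + 1 : ℕ) : ℚ) := by exact_mod_cast (by omega : 1 < m + 1)
    have h3 : (1 : ℚ) < ((m + 1 : ℕ) : ℚ) ^ Module.finrank ℚ K :=
      one_lt_pow₀ h2 Module.finrank_pos.ne'
    rw [abs_of_pos (by linarith)]
    exact h3.ne'
  obtain ⟨M, hM, hle⟩ := Ideal.exists_le_maximal (Ideal.span {((m + 1 : ℕ) : 𝓞 K)})
    (by rwa [Ne, Ideal.span_singleton_eq_top])
  have hmem : ((m + 1 : ℕ) : 𝓞 K) ∈ M := hle (Ideal.mem_span_singleton_self _)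
  have hne : M ≠ ⊥ := by
    rintro rfl
    rw [Ideal.mem_bot] at hmem
    exact absurd hmem (by exact_mod_cast Nat.succ_ne_zero m)
  obtain ⟨u, hu⟩ : ∃ u : HeightOneSpectrum (𝓞 K), u.asIdeal = M := ⟨⟨M, hM.isPrime, hne⟩, rfl⟩
  refine ⟨u, fun hT => ?_⟩
  have h1 : ((m : ℕ) : 𝓞 K) ∈ M := by
    have hd : Ideal.absNorm u.asIdeal ∣ m :=
      Finset.dvd_prod_of_mem (fun v : HeightOneSpectrum (𝓞 K) => Ideal.absNorm v.asIdeal) hT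
    rw [hu] at hd
    clear_value m
    obtain ⟨c, rfl⟩ := hd
    rw [Nat.cast_mul]
    exact M.mul_mem_right _ (Ideal.absNorm_mem M)
  apply hM.ne_top
  rw [Ideal.eq_top_iff_one]
  have := M.sub_mem hmem h1
  simpa using this

/-- the finite absolute values -/
noncomputable abbrev ab (v : HeightOneSpectrum (𝓞 K)) : AbsoluteValue K ℝ :=
  NumberField.HeightOneSpectrum.adicAbv K v

lemma ab_na (v : HeightOneSpectrum (𝓞 K)) : IsNonarchimedean (ab v : AbsoluteValue K ℝ) :=
  NumberField.HeightOneSpectrum.isNonarchimedean_adicAbv K v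

lemma finprod_eq (x : K) : ∏ᶠ w : FinitePlace K, w x = ∏ᶠ v : HeightOneSpectrum (𝓞 K), ab v x := by
  rw [← finprod_comp_equiv FinitePlace.equivHeightOneSpectrum.symm]
  refine finprod_congr fun v => ?_
  rw [FinitePlace.equivHeightOneSpectrum_symm_apply, FinitePlace.norm_embedding]

lemma ab_support {x : K} (hx : x ≠ 0) :
    {v : HeightOneSpectrum (𝓞 K) | ab v x ≠ 1}.Finite := by
  have h := FinitePlace.hasFiniteMulSupport hx
  have h2 := Set.Finite.preimage (f := FinitePlace.equivHeightOneSpectrum.symm)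
    (FinitePlace.equivHeightOneSpectrum.symm.injective.injOn) h
  refine h2.subset fun v hv => ?_
  simp only [Set.mem_preimage, Function.mem_mulSupport]
  rw [FinitePlace.equivHeightOneSpectrum_symm_apply, FinitePlace.norm_embedding]
  exact hv

/-- product formula inequality -/
lemma prod_ge (U : Finset (HeightOneSpectrum (𝓞 K))) {x : K} (hx : x ≠ 0)
    (h : ∀ v ∉ U, ab v x ≤ 1) :
    1 ≤ (∏ w : InfinitePlace K, w x ^ w.mult) * ∏ v ∈ U, ab v x := by
  classical
  have hp := NumberField.prod_abs_eq_one hx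
  rw [finprod_eq] at hp
  have hsub : Function.mulSupport (fun v : HeightOneSpectrum (𝓞 K) => ab v x) ⊆
      ↑(U ∪ (ab_support hx).toFinset) := by
    intro v hv
    simp only [Finset.coe_union, Set.Finite.coe_toFinset]
    exact Or.inr hv
  rw [finprod_eq_prod_of_mulSupport_subset _ hsub] at hp
  have hle : ∏ v ∈ U ∪ (ab_support hx).toFinset, ab v x ≤ ∏ v ∈ U, ab v x := by
    rw [← Finset.prod_sdiff (Finset.subset_union_left (s₁ := U) (s₂ := (ab_support hx).toFinset))]
    refine mul_le_of_le_one_left (Finset.prod_nonneg fun v _ => (ab v).nonneg _) ?_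
    refine Finset.prod_le_one (fun v _ => (ab v).nonneg _) fun v hv => ?_
    exact h v (Finset.mem_sdiff.mp hv).2
  rw [← hp]
  exact mul_le_mul_of_nonneg_left hle (Finset.prod_nonneg fun w _ => pow_nonneg (w.1.nonneg _) _)

/-- elements integral outside `U` -/
noncomputable def OU (U : Finset (HeightOneSpectrum (𝓞 K))) : Subring K where
  carrier := {x | ∀ v ∉ U, ab v x ≤ 1}
  mul_mem' := by
    intro a b ha hb v hv
    rw [map_mul]; exact mul_le_one₀ (ha v hv) ((ab v).nonneg _) (hb v hv)
  one_mem' := by intro v _; rw [map_one]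
  add_mem' := by
    intro a b ha hb v hv
    exact (ab_na v a b).trans (max_le (ha v hv) (hb v hv))
  zero_mem' := by intro v _; rw [map_zero]; exact zero_le_one
  neg_mem' := by
    intro a ha v hv
    rw [AbsoluteValue.map_neg]; exact ha v hv

noncomputable def thePD (T U : Finset (HeightOneSpectrum (𝓞 K))) (Z : Set K)
    (Z0 : ∀ z ∈ Z, z ≠ 0) (Z1 : ∀ z ∈ Z, z ≠ 1)
    (fix0 : ∀ z ∈ Z, ∀ z' ∈ Z, ∀ v ∉ T, ab v z = ab v z')
    (fix1 : ∀ z ∈ Z, ∀ z' ∈ Z, ∀ v ∉ T, ab v (1 - z) = ab v (1 - z'))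
    (U0 : ∀ z ∈ Z, ∀ v ∉ U, ab v z = 1) (U1 : ∀ z ∈ Z, ∀ v ∉ U, ab v (1 - z) = 1) :
    PD K (InfinitePlace K ⊕ {v // v ∈ U}) where
  av := Sum.elim (fun w => w.1) (fun v => ab v.1)
  wt := Sum.elim (fun w => (w.mult : ℝ)) (fun _ => 1)
  wt_nonneg := by rintro (w | v) <;> simp
  A := Sum.elim (fun _ => 2) (fun _ => 1)
  hA := by
    rintro (w | v)
    · exact Or.inr rfl
    · exact Or.inl ⟨rfl, ab_na v.1⟩
  S := by classical exact Finset.univ.disjSum (T.subtype (· ∈ U))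
  Z := Z
  Z0 := Z0
  Z1 := Z1
  fix0 := by
    rintro z hz z' hz' (w | v) hw
    · simp at hw
    · exact fix0 z hz z' hz' v.1 (by simpa using hw)
  fix1 := by
    rintro z hz z' hz' (w | v) hw
    · simp at hw
    · exact fix1 z hz z' hz' v.1 (by simpa using hw)
  O := OU U
  PF := by
    intro D hD hD0
    have h := prod_ge U hD0 hD
    have h2 := Real.log_nonneg h
    have p1 : ∀ w : InfinitePlace K, w D ^ w.mult ≠ 0 := fun w =>
      pow_ne_zero _ (w.1.ne_zero hD0)
    have p2 : ∀ v : HeightOneSpectrum (𝓞 K), ab v D ≠ 0 := fun v => (ab v).ne_zero hD0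
    rw [Real.log_mul (Finset.prod_ne_zero_iff.mpr fun w _ => p1 w)
      (Finset.prod_ne_zero_iff.mpr fun v _ => p2 v), Real.log_prod fun w _ => p1 w,
      Real.log_prod fun v _ => p2 v] at h2
    rw [Fintype.sum_sum_type]
    simp only [Sum.elim_inl, Sum.elim_inr, one_mul]
    rw [Finset.sum_coe_sort U (fun v => Real.log (ab v D))]
    simp only [Real.log_pow] at h2
    exact h2
  ZO := fun z hz v hv => (U0 z hz v hv).le
  ZO0 := fun z hz v hv => by rw [map_inv₀, U0 z hz v hv, inv_one]
  ZO1 := fun z hz v hv => by rw [map_inv₀, U1 z hz v hv, inv_one]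
  emb := by
    rintro (w | v) h
    · exact ⟨by simp, w.embedding, fun x => (InfinitePlace.norm_embedding_eq w x).symm⟩
    · simp at h
  pos := by
    obtain ⟨w⟩ := (inferInstance : Nonempty (InfinitePlace K))
    refine ⟨Sum.inl w, by simp, ?_⟩
    simp only [Sum.elim_inl, Nat.cast_pos]
    exact InfinitePlace.mult_pos

theorem unit_bound (T : Finset (HeightOneSpectrum (𝓞 K))) (Z : Set K)
    (Z0 : ∀ z ∈ Z, z ≠ 0) (Z1 : ∀ z ∈ Z, z ≠ 1)
    (fix0 : ∀ z ∈ Z, ∀ z' ∈ Z, ∀ v ∉ T, ab v z = ab v z')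
    (fix1 : ∀ z ∈ Z, ∀ z' ∈ Z, ∀ v ∉ T, ab v (1 - z) = ab v (1 - z')) :
    Z.Finite ∧ Z.ncard ≤ 2 ^ (16 * (T.card + Fintype.card (InfinitePlace K))) := by
  classical
  rcases Z.eq_empty_or_nonempty with rfl | ⟨z0, hz0⟩
  · simp
  have n0 := Z0 z0 hz0
  have n1 : 1 - z0 ≠ 0 := sub_ne_zero.mpr (Z1 z0 hz0).symm
  let U := T ∪ ((ab_support n0).toFinset ∪ (ab_support n1).toFinset)
  have hU : ∀ v ∉ U, v ∉ T ∧ ab v z0 = 1 ∧ ab v (1 - z0) = 1 := by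
    intro v hv
    simp only [U, Finset.mem_union, Set.Finite.mem_toFinset, Set.mem_ofPred_eq, not_or,
      not_not] at hv
    exact hv
  have := (PD.finite_ncard (P := thePD T U Z Z0 Z1 fix0 fix1
    (fun z hz v hv => by rw [fix0 z hz z0 hz0 v (hU v hv).1]; exact (hU v hv).2.1)
    (fun z hz v hv => by rw [fix1 z hz z0 hz0 v (hU v hv).1]; exact (hU v hv).2.2)))
  refine ⟨this.1, this.2.trans (le_of_eq ?_)⟩
  congr 2
  change (Finset.univ.disjSum (T.subtype (· ∈ U))).card = _
  rw [Finset.card_disjSum, Finset.card_subtype, Finset.filter_true_of_mem, Finset.card_univ,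
    add_comm]
  exact fun v hv => Finset.mem_union_left _ hv

end numfield
end TPL

end


open NumberField IsDedekindDomain MvPolynomial
open scoped Classical nonZeroDivisors

set_option synthInstance.maxHeartbeats 1000000
set_option maxHeartbeats 1000000

namespace TPL
section reduction
variable {K : Type*} [Field K] [NumberField K]

lemma val_eq (v : HeightOneSpectrum (𝓞 K)) {x : K} (hx : x ≠ 0) :
    v.valuation K x = ((Multiplicative.ofAdd (- ordAt v x) : Multiplicative ℤ) :
      WithZero (Multiplicative ℤ)) := by
  rw [ordAt, dif_neg hx, neg_neg, ofAdd_toAdd, WithZero.coe_unzero]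

lemma val_div (v : HeightOneSpectrum (𝓞 K)) {x y : K} (hx : x ≠ 0) (hy : y ≠ 0) :
    v.valuation K (x / y) = ((Multiplicative.ofAdd (ordAt v y - ordAt v x) : Multiplicative ℤ) :
      WithZero (Multiplicative ℤ)) := by
  rw [map_div₀, val_eq v hx, val_eq v hy, ← WithZero.coe_div, ← ofAdd_sub]
  congr 2; ring

lemma ab_div_eq (v : HeightOneSpectrum (𝓞 K)) {x y x' y' : K} (hx : x ≠ 0) (hy : y ≠ 0)
    (hx' : x' ≠ 0) (hy' : y' ≠ 0) (h : ordAt v x - ordAt v y = ordAt v x' - ordAt v y') :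
    ab v (x / y) = ab v (x' / y') := by
  have : v.valuation K (x / y) = v.valuation K (x' / y') := by
    rw [val_div v hx hy, val_div v hx' hy']
    congr 2; omega
  rw [ab, NumberField.HeightOneSpectrum.adicAbv_def, NumberField.HeightOneSpectrum.adicAbv_def,
    this]

/-- the determinant of two points -/
noncomputable def dt (P Q : P1 K) : K := P.rep 0 * Q.rep 1 - P.rep 1 * Q.rep 0

lemma eq_of_dt {P Q : P1 K} (h : dt P Q = 0) : P = Q := by
  unfold dt at h
  rw [← P.mk_rep, ← Q.mk_rep, Projectivization.mk_eq_mk_iff']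
  have hq := Q.rep_nonzero
  by_cases h0 : Q.rep 0 = 0
  · have h1 : Q.rep 1 ≠ 0 := by
      intro h1; apply hq; funext i; fin_cases i
      · exact h0
      · exact h1
    refine ⟨P.rep 1 / Q.rep 1, ?_⟩
    funext i; fin_cases i
    · change P.rep 1 / Q.rep 1 * Q.rep 0 = P.rep 0
      rw [div_mul_eq_mul_div, div_eq_iff h1]; linear_combination -h
    · change P.rep 1 / Q.rep 1 * Q.rep 1 = P.rep 1
      rw [div_mul_cancel₀ _ h1]
  · refine ⟨P.rep 0 / Q.rep 0, ?_⟩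
    funext i; fin_cases i
    · change P.rep 0 / Q.rep 0 * Q.rep 0 = P.rep 0
      rw [div_mul_cancel₀ _ h0]
    · change P.rep 0 / Q.rep 0 * Q.rep 1 = P.rep 1
      rw [div_mul_eq_mul_div, div_eq_iff h0]; linear_combination h

lemma ord_of_logDist {v : HeightOneSpectrum (𝓞 K)} {P Q : P1 K} {n : ℤ}
    (h : logDist v P Q = (n : WithTop ℤ)) :
    P ≠ Q ∧ ordAt v (dt P Q) = n + minOrd v (P.rep 0) (P.rep 1) + minOrd v (Q.rep 0) (Q.rep 1) := by
  unfold logDist at h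
  split_ifs at h with hPQ
  · exact absurd h WithTop.top_ne_coe
  · refine ⟨hPQ, ?_⟩
    have := WithTop.coe_injective h
    unfold dt; linarith

/-- the affine coordinate -/
noncomputable def zz (Q : Fin 3 → P1 K) (P : P1 K) : K :=
  -(dt (Q 1) (Q 2) / dt (Q 0) (Q 1)) * (dt P (Q 0) / dt P (Q 2))

lemma one_sub_zz (Q : Fin 3 → P1 K) (P : P1 K) (h01 : dt (Q 0) (Q 1) ≠ 0) (h2 : dt P (Q 2) ≠ 0) :
    1 - zz Q P = -(dt (Q 2) (Q 0) / dt (Q 0) (Q 1)) * (dt P (Q 1) / dt P (Q 2)) := by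
  unfold zz
  field_simp
  unfold dt; ring

theorem main (T : Finset (HeightOneSpectrum (𝓞 K)))
    (Q : Fin 3 → P1 K) (hQ : Function.Injective Q)
    (n : Fin 3 → HeightOneSpectrum (𝓞 K) → ℕ) :
    {P : P1 K | ∀ i : Fin 3, ∀ v ∉ T,
        logDist v P (Q i) = ((n i v : ℤ) : WithTop ℤ)}.Finite ∧
      {P : P1 K | ∀ i : Fin 3, ∀ v ∉ T,
        logDist v P (Q i) = ((n i v : ℤ) : WithTop ℤ)}.ncard ≤ Bconst (sCard K T) := by
  set PP : Set (P1 K) := {P : P1 K | ∀ i : Fin 3, ∀ v ∉ T,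
        logDist v P (Q i) = ((n i v : ℤ) : WithTop ℤ)} with hPP
  have hmem : ∀ P ∈ PP, ∀ i : Fin 3, ∀ v ∉ T,
      logDist v P (Q i) = ((n i v : ℤ) : WithTop ℤ) := fun P hP => hP
  clear_value PP
  have dne : ∀ P P' : P1 K, P ≠ P' → dt P P' ≠ 0 := fun P P' h h' => h (eq_of_dt h')
  have q01 : dt (Q 0) (Q 1) ≠ 0 := dne _ _ (hQ.ne (by decide))
  have q12 : dt (Q 1) (Q 2) ≠ 0 := dne _ _ (hQ.ne (by decide))
  have q20 : dt (Q 2) (Q 0) ≠ 0 := dne _ _ (hQ.ne (by decide))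
  obtain ⟨v0, hv0⟩ := exists_prime_notMem T
  have pne : ∀ P ∈ PP, ∀ i, dt P (Q i) ≠ 0 := fun P hP i =>
    dne _ _ (ord_of_logDist (hmem P hP i v0 hv0)).1
  have hord : ∀ P ∈ PP, ∀ P' ∈ PP, ∀ v ∉ T, ∀ i j,
      ordAt v (dt P (Q i)) - ordAt v (dt P (Q j)) =
      ordAt v (dt P' (Q i)) - ordAt v (dt P' (Q j)) := by
    intro P hP P' hP' v hv i j
    rw [(ord_of_logDist (hmem P hP i v hv)).2, (ord_of_logDist (hmem P hP j v hv)).2,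
      (ord_of_logDist (hmem P' hP' i v hv)).2, (ord_of_logDist (hmem P' hP' j v hv)).2]
    ring
  have inj : Set.InjOn (zz Q) PP := by
    intro P hP P' hP' h
    unfold zz at h
    have h1 := mul_left_cancel₀ (neg_ne_zero.mpr (div_ne_zero q12 q01)) h
    rw [div_eq_div_iff (pne P hP 2) (pne P' hP' 2)] at h1
    apply eq_of_dt
    have h2 : dt P P' * dt (Q 2) (Q 0) = 0 := by
      unfold dt at h1 ⊢; linear_combination -h1
    exact (mul_eq_zero.mp h2).resolve_right q20
  have key := unit_bound T (zz Q '' PP)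
    (by
      rintro _ ⟨P, hP, rfl⟩
      exact mul_ne_zero (neg_ne_zero.mpr (div_ne_zero q12 q01))
        (div_ne_zero (pne P hP 0) (pne P hP 2)))
    (by
      rintro _ ⟨P, hP, rfl⟩ h
      have h1 := one_sub_zz Q P q01 (pne P hP 2)
      rw [h, sub_self] at h1
      exact mul_ne_zero (neg_ne_zero.mpr (div_ne_zero q20 q01))
        (div_ne_zero (pne P hP 1) (pne P hP 2)) h1.symm)
    (by
      rintro _ ⟨P, hP, rfl⟩ _ ⟨P', hP', rfl⟩ v hv
      unfold zz
      rw [map_mul, map_mul, ab_div_eq v (pne P hP 0) (pne P hP 2) (pne P' hP' 0) (pne P' hP' 2)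
        (hord P hP P' hP' v hv 0 2)])
    (by
      rintro _ ⟨P, hP, rfl⟩ _ ⟨P', hP', rfl⟩ v hv
      rw [one_sub_zz Q P q01 (pne P hP 2), one_sub_zz Q P' q01 (pne P' hP' 2), map_mul, map_mul,
        ab_div_eq v (pne P hP 1) (pne P hP 2) (pne P' hP' 1) (pne P' hP' 2)
        (hord P hP P' hP' v hv 1 2)])
  refine ⟨Set.Finite.of_finite_image key.1 inj, ?_⟩
  rw [← inj.ncard_image]
  exact key.2

end reduction
end TPL



/-- **Three-Point Lemma B.** Given three distinct points `Q₁, Q₂, Q₃ ∈ ℙ¹(K)` and a fixed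
choice of nonnegative integers `n_{i,𝔭}` for `i ∈ {1,2,3}` and `𝔭 ∉ S`, the set of points
`P ∈ ℙ¹(K)` with `δ_𝔭(P,Qᵢ) = n_{i,𝔭}` for each `i` and each `𝔭 ∉ S` has cardinality at most
`B(|S|) = 2^{16|S|}`. -/
theorem three_point_lemma_B
    {K : Type*} [Field K] [NumberField K]
    (T : Finset (HeightOneSpectrum (𝓞 K)))
    (Q : Fin 3 → P1 K) (hQ : Function.Injective Q)
    (n : Fin 3 → HeightOneSpectrum (𝓞 K) → ℕ) :
    {P : P1 K | ∀ i : Fin 3, ∀ v ∉ T,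
        logDist v P (Q i) = ((n i v : ℤ) : WithTop ℤ)}.Finite ∧
      {P : P1 K | ∀ i : Fin 3, ∀ v ∉ T,
        logDist v P (Q i) = ((n i v : ℤ) : WithTop ℤ)}.ncard ≤ Bconst (sCard K T) := by
  exact TPL.main T Q hQ n
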